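/- arXiv:2505.05526 — 3 statements merged into one kernel-verified Lean document; each statement's English description precedes it below -/
import Mathlib

section
/- Let U : ℂ₊ → [0,∞) be a positive harmonic function on the upper half-plane ℂ₊ = {z ∈ ℂ : Im z > 0}, and suppose there is a constant C > 0 such that U(x+iy) ≤ C/y for all x ∈ ℝ and y > 0. Then there exists a finite positive Borel measure μ on ℝ such that U(x+iy) = (1/π) ∫_ℝ y/((x−u)² + y²) dμ(u) for all x ∈ ℝ, y > 0; moreover such a measure μ is unique. -/
open MeasureTheory

/-! The Poisson integrals of the dilates `f (r w)` represent a nonnegative harmonic function `f` on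
the unit disc, and a weak limit of the boundary measures as `r → 1`, all of mass `f 0`, represents
`f` itself. The Cayley transform carries this representation to the upper half-plane, where the
mass at the boundary point `1` becomes a linear term `a * y` and the rest a Poisson integral over
`ℝ`. The bound `C / y` on the imaginary axis forces `a = 0` and, by Fatou's lemma, total mass at
most `π * C`. The measure is unique because its Poisson integral at height `y` is the density of
its convolution with the Cauchy distribution of scale `y`, whose characteristic function tends to
`1` as `y → 0`. -/

open Filter Topology InnerProductSpace Metric ProbabilityTheory
open scoped NNReal ENNReal

theorem iteratedDeriv_comp_add_smul {𝕜 E F : Type*} [NontriviallyNormedField 𝕜]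
    [NormedAddCommGroup E] [NormedSpace 𝕜 E] [NormedAddCommGroup F] [NormedSpace 𝕜 F]
    {n : ℕ} {g : E → F} {x v : E} {t : 𝕜} (hg : ContDiffAt 𝕜 n g (x + t • v)) :
    iteratedDeriv n (fun s : 𝕜 ↦ g (x + s • v)) t
      = iteratedFDeriv 𝕜 n g (x + t • v) fun _ ↦ v := by
  induction n generalizing t with
  | zero => simp
  | succ n ih =>
    have hline (s : 𝕜) : HasDerivAt (fun s : 𝕜 ↦ x + s • v) v s := by
      simpa using ((hasDerivAt_id s).smul_const v).const_add x
    have hg_near : ∀ᶠ s in 𝓝 t, ContDiffAt 𝕜 (n + 1 : ℕ) g (x + s • v) :=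
      (hline t).continuousAt.eventually (hg.eventually (by simp))
    have ih_near : iteratedDeriv n (fun s : 𝕜 ↦ g (x + s • v))
        =ᶠ[𝓝 t] fun s ↦ iteratedFDeriv 𝕜 n g (x + s • v) fun _ ↦ v :=
      hg_near.mono fun s hs ↦ ih (hs.of_le (mod_cast n.le_succ))
    have hdiff : DifferentiableAt 𝕜 (iteratedFDeriv 𝕜 n g) (x + t • v) :=
      hg.differentiableAt_iteratedFDeriv (mod_cast n.lt_succ_self)
    have hderiv := (ContinuousMultilinearMap.apply 𝕜 (fun _ : Fin n ↦ E) F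
      fun _ ↦ v).hasFDerivAt.comp_hasDerivAt t (hdiff.hasFDerivAt.comp_hasDerivAt t (hline t))
    rw [iteratedDeriv_succ, ih_near.deriv_eq, iteratedFDeriv_succ_apply_left]
    exact hderiv.deriv

theorem harmonicOnNhd_of_iteratedDeriv_two_add_eq_zero {F : Type*} [NormedAddCommGroup F]
    [NormedSpace ℝ F] {U : ℝ → ℝ → F} {s : Set (ℝ × ℝ)} (hs : IsOpen s)
    (hU : ContDiffOn ℝ 2 (fun p : ℝ × ℝ ↦ U p.1 p.2) s)
    (hlap : ∀ p ∈ s, iteratedDeriv 2 (fun x ↦ U x p.2) p.1 + iteratedDeriv 2 (U p.1) p.2 = 0) :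
    HarmonicOnNhd (fun z : ℂ ↦ U z.re z.im) {z | (z.re, z.im) ∈ s} := by
  have hs' : IsOpen {z : ℂ | (z.re, z.im) ∈ s} :=
    hs.preimage (Complex.continuous_re.prodMk Complex.continuous_im)
  have hcont (z : ℂ) (hz : (z.re, z.im) ∈ s) :
      ContDiffAt ℝ 2 (fun z : ℂ ↦ U z.re z.im) z :=
    (hU.contDiffAt (hs.mem_nhds hz)).comp (f := fun z : ℂ ↦ (z.re, z.im)) z
      (Complex.reCLM.contDiff.prodMk Complex.imCLM.contDiff).contDiffAt
  refine fun z hz ↦ ⟨hcont z hz, ?_⟩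
  filter_upwards [hs'.mem_nhds hz] with w hw
  have hre : (w.im * Complex.I + w.re • 1 : ℂ) = w := by apply Complex.ext <;> simp
  have him : (w.re + w.im • Complex.I : ℂ) = w := by apply Complex.ext <;> simp
  have hxx := iteratedDeriv_comp_add_smul (n := 2) (t := w.re) (v := 1)
    (x := (w.im * Complex.I : ℂ)) (hcont _ (hre.symm ▸ hw))
  have hyy := iteratedDeriv_comp_add_smul (n := 2) (t := w.im) (v := Complex.I) (x := (w.re : ℂ))
    (hcont _ (him.symm ▸ hw))
  rw [hre] at hxx
  rw [him] at hyy
  have hconst (v : ℂ) : ![v, v] = fun _ ↦ v := by ext i; fin_cases i <;> rfl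
  rw [laplacian_eq_iteratedFDeriv_complexPlane]
  simp only [hconst, ← hxx, ← hyy]
  simpa using hlap _ hw

theorem harmonicAt_comp_analyticAt {f : ℂ → ℝ} {g : ℂ → ℂ} {z : ℂ} (hf : HarmonicAt f (g z))
    (hg : AnalyticAt ℂ g z) : HarmonicAt (f ∘ g) z := by
  obtain ⟨ε, hε, hball⟩ := Metric.eventually_nhds_iff_ball.1 hf.eventually
  obtain ⟨F, hF, hFf⟩ := HarmonicOnNhd.exists_analyticOnNhd_ball_re_eq hball
  have hmem : ∀ᶠ w in 𝓝 z, g w ∈ ball (g z) ε := hg.continuousAt (ball_mem_nhds _ hε)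
  refine (harmonicAt_congr_nhds (hmem.mono fun w hw ↦ ?_)).1
    (((hF _ (mem_ball_self hε)).comp hg).harmonicAt_re)
  exact hFf hw

theorem exists_isProbabilityMeasure_circleAverage_eq_integral (c : ℂ) {R : ℝ} (hR : 0 ≤ R) :
    ∃ σ : Measure (sphere c R), IsProbabilityMeasure σ ∧
      ∀ φ : ℂ → ℝ, ContinuousOn φ (sphere c R) → Real.circleAverage φ c R = ∫ ζ, φ ζ ∂σ := by
  let m : Measure ℝ := ENNReal.ofReal (2 * Real.pi)⁻¹ • volume.restrict (Set.Ioc 0 (2 * Real.pi))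
  let arc : ℝ → sphere c R := fun θ ↦ ⟨circleMap c R θ, circleMap_mem_sphere c hR θ⟩
  have harc : Measurable arc := (continuous_circleMap c R).measurable.subtype_mk
  have hm : IsProbabilityMeasure m := ⟨by
    rw [Measure.smul_apply, Measure.restrict_apply_univ, Real.volume_Ioc, sub_zero, smul_eq_mul,
      ← ENNReal.ofReal_mul (by positivity), inv_mul_cancel₀ Real.two_pi_pos.ne',
      ENNReal.ofReal_one]⟩
  refine ⟨m.map arc, Measure.isProbabilityMeasure_map harc.aemeasurable, fun φ hφ ↦ ?_⟩
  have hφ' : Continuous fun ζ : sphere c R ↦ φ ζ := continuousOn_iff_continuous_domRestrict.1 hφ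
  rw [integral_map harc.aemeasurable hφ'.aestronglyMeasurable, integral_smul_measure,
    ENNReal.toReal_ofReal (by positivity), Real.circleAverage_def,
    intervalIntegral.integral_of_le Real.two_pi_pos.le]

theorem continuousOn_poissonKernel_sphere {c w : ℂ} {R : ℝ} (hw : w ∈ ball c R) :
    ContinuousOn (poissonKernel c w) (sphere c R) := by
  have hcont := continuousOn_herglotzRieszKernel_sphere hw
  rw [abs_of_pos (pos_of_mem_ball hw)] at hcont
  rw [poissonKernel_eq_re_herglotzRieszKernel]
  exact Complex.continuous_re.comp_continuousOn hcont

theorem poissonKernel_center {c z : ℂ} (hz : z ≠ c) : poissonKernel c c z = 1 := by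
  simp [poissonKernel_def, sub_ne_zero.2 hz]

theorem exists_measure_integral_poissonKernel_eq_of_closedBall {f : ℂ → ℝ} {c : ℂ} {R : ℝ}
    (hR : 0 < R) (hf : HarmonicOnNhd f (closedBall c R)) (hf0 : ∀ z ∈ sphere c R, 0 ≤ f z) :
    ∃ ν : FiniteMeasure (sphere c R), ν.mass = f c ∧
      ∀ w ∈ ball c R, ∫ ζ, poissonKernel c w ζ ∂(ν : Measure (sphere c R)) = f w := by
  obtain ⟨σ, hσ, havg⟩ := exists_isProbabilityMeasure_circleAverage_eq_integral c hR.le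
  have hf_cont : ContinuousOn f (sphere c R) := hf.continuousOn.mono sphere_subset_closedBall
  have hf_cont' : Continuous fun ζ : sphere c R ↦ f ζ :=
    continuousOn_iff_continuous_domRestrict.1 hf_cont
  let ν : Measure (sphere c R) := σ.withDensity fun ζ ↦ ENNReal.ofReal (f ζ)
  have hf_int : Integrable (fun ζ : sphere c R ↦ f ζ) σ :=
    hf_cont'.integrable_of_hasCompactSupport (.of_compactSpace _)
  have hν : IsFiniteMeasure ν := isFiniteMeasure_withDensity_ofReal hf_int.2
  have hrep (w : ℂ) (hw : w ∈ ball c R) : ∫ ζ, poissonKernel c w ζ ∂ν = f w := by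
    rw [← hf.circleAverage_poissonKernel_smul hw,
      havg _ ((continuousOn_poissonKernel_sphere hw).smul hf_cont),
      integral_withDensity_eq_integral_toReal_smul hf_cont'.measurable.ennreal_ofReal
        (by simp)]
    refine integral_congr_ae (ae_of_all _ fun ζ ↦ ?_)
    simp only [ENNReal.toReal_ofReal (hf0 ζ ζ.2), smul_eq_mul, Pi.smul_apply', mul_comm]
  refine ⟨⟨ν, hν⟩, ?_, hrep⟩
  have hone (ζ : sphere c R) : poissonKernel c c ζ = 1 :=
    poissonKernel_center (ne_of_mem_sphere ζ.2 hR.ne')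
  rw [← hrep c (mem_ball_self hR)]
  simp only [hone, integral_const, smul_eq_mul, mul_one]
  rfl

theorem add_mul_sub_mem_ball {c z : ℂ} {R t : ℝ} (hR : 0 < R) (ht : t ∈ Set.Ioo 0 1)
    (hz : z ∈ closedBall c R) : c + t * (z - c) ∈ ball c R := by
  rw [mem_ball_iff_norm, add_sub_cancel_left, norm_mul, Complex.norm_of_nonneg ht.1.le]
  calc t * ‖z - c‖ ≤ t * R := mul_le_mul_of_nonneg_left (mem_closedBall_iff_norm.1 hz) ht.1.le
    _ < R := mul_lt_of_lt_one_left hR ht.2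

theorem exists_measure_integral_poissonKernel_eq_dilation {f : ℂ → ℝ} {c : ℂ} {R t : ℝ}
    (hR : 0 < R) (ht : t ∈ Set.Ioo 0 1) (hf : HarmonicOnNhd f (ball c R))
    (hf0 : ∀ z ∈ ball c R, 0 ≤ f z) :
    ∃ ν : FiniteMeasure (sphere c R), ν.mass = f c ∧ ∀ w ∈ ball c R,
      ∫ ζ, poissonKernel c w ζ ∂(ν : Measure (sphere c R)) = f (c + t * (w - c)) := by
  simpa using exists_measure_integral_poissonKernel_eq_of_closedBall
    (f := f ∘ fun z ↦ c + t * (z - c)) hR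
    (fun z hz ↦ harmonicAt_comp_analyticAt (hf _ (add_mul_sub_mem_ball hR ht hz)) (by fun_prop))
    (fun z hz ↦ hf0 _ (add_mul_sub_mem_ball hR ht (sphere_subset_closedBall hz)))

theorem exists_measure_eq_integral_poissonKernel {f : ℂ → ℝ} {c : ℂ} {R : ℝ}
    (hR : 0 < R) (hf : HarmonicOnNhd f (ball c R)) (hf0 : ∀ z ∈ ball c R, 0 ≤ f z) :
    ∃ ν : Measure (sphere c R), IsFiniteMeasure ν ∧
      ∀ w ∈ ball c R, f w = ∫ ζ, poissonKernel c w ζ ∂ν := by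
  choose! ν hmass hrep using fun (t : ℝ) (ht : t ∈ Set.Ioo 0 1) ↦
    exists_measure_integral_poissonKernel_eq_dilation hR ht hf hf0
  let 𝒰 : Ultrafilter ℝ := Ultrafilter.of (𝓝[<] 1)
  have h𝒰 : (𝒰 : Filter ℝ) ≤ 𝓝[<] 1 := Ultrafilter.of_le _
  have h𝒰_mem : ∀ᶠ t in 𝒰, t ∈ Set.Ioo (0 : ℝ) 1 := h𝒰 (Ioo_mem_nhdsLT one_pos)
  obtain ⟨ν₁, -, hν₁⟩ := (isCompact_setOfPred_finiteMeasure_le_of_compactSpace (sphere c R)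
    (f c).toNNReal).ultrafilter_le_nhds (𝒰.map ν) (by
      rw [le_principal_iff]
      exact Filter.mem_map.2 (h𝒰_mem.mono fun t ht ↦ by simp [← hmass t ht]))
  refine ⟨ν₁, inferInstance, fun w hw ↦ tendsto_nhds_unique
    (f := fun t : ℝ ↦ f (c + t * (w - c))) (l := (𝒰 : Filter ℝ)) ?_ ?_⟩
  · have hcont : ContinuousAt (fun t : ℝ ↦ f (c + t * (w - c))) 1 := by
      refine ContinuousAt.comp (g := f) ?_ (by fun_prop)
      simpa using (hf w hw).1.continuousAt
    simpa using hcont.tendsto.mono_left (h𝒰.trans nhdsWithin_le_nhds)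
  · have hcont : Continuous fun ζ : sphere c R ↦ poissonKernel c w ζ :=
      continuousOn_iff_continuous_domRestrict.1 (continuousOn_poissonKernel_sphere hw)
    exact (FiniteMeasure.tendsto_iff_forall_integral_tendsto.1 hν₁
      (BoundedContinuousFunction.mkOfCompact ⟨_, hcont⟩)).congr'
        (h𝒰_mem.mono fun t ht ↦ hrep t ht w hw)

/-- The Poisson kernel of the upper half-plane, `P_y(x - u)` at `z = x + iy`. -/
noncomputable def halfPlanePoissonKernel (z : ℂ) (u : ℝ) : ℝ := z.im / (Real.pi * ‖z - u‖ ^ 2)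

theorem halfPlanePoissonKernel_mk (x y u : ℝ) :
    halfPlanePoissonKernel ⟨x, y⟩ u = 1 / Real.pi * (y / ((x - u) ^ 2 + y ^ 2)) := by
  rw [halfPlanePoissonKernel, ← Complex.normSq_eq_norm_sq, Complex.normSq_apply]
  simp only [Complex.sub_re, Complex.sub_im, Complex.ofReal_re, Complex.ofReal_im, sub_zero, ← sq]
  field_simp

theorem halfPlanePoissonKernel_nonneg {z : ℂ} (hz : 0 ≤ z.im) (u : ℝ) :
    0 ≤ halfPlanePoissonKernel z u := by
  unfold halfPlanePoissonKernel
  positivity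

theorem continuous_halfPlanePoissonKernel {z : ℂ} (hz : z.im ≠ 0) :
    Continuous (halfPlanePoissonKernel z) := by
  have hne (u : ℝ) : ‖z - u‖ ≠ 0 := fun h ↦ hz <| by
    simpa using congrArg Complex.im (norm_eq_zero.1 h)
  unfold halfPlanePoissonKernel
  fun_prop (disch := simp [Real.pi_ne_zero, hne])

theorem integrable_halfPlanePoissonKernel (μ : Measure ℝ) [IsFiniteMeasure μ] {z : ℂ}
    (hz : z.im ≠ 0) : Integrable (halfPlanePoissonKernel z) μ := by
  refine .of_bound (continuous_halfPlanePoissonKernel hz).aestronglyMeasurable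
    (1 / (Real.pi * |z.im|)) (ae_of_all _ fun u ↦ ?_)
  have him : |z.im| ≤ ‖z - u‖ := by simpa using Complex.abs_im_le_norm (z - u)
  have : 0 < |z.im| := abs_pos.2 hz
  calc ‖halfPlanePoissonKernel z u‖ = |z.im| / (Real.pi * ‖z - u‖ ^ 2) := by
        simp [halfPlanePoissonKernel, abs_of_pos Real.pi_pos]
    _ ≤ |z.im| / (Real.pi * |z.im| ^ 2) := by gcongr
    _ = 1 / (Real.pi * |z.im|) := by field_simp

/-- The inverse Cayley transform, mapping the unit disc to the upper half-plane and the unit circle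
minus `1` to the real line. At `w = 1` it takes the junk value `0`. -/
noncomputable def invCayley (w : ℂ) : ℂ := Complex.I * ((1 + w) / (1 - w))

theorem im_invCayley (w : ℂ) : (invCayley w).im = poissonKernel 0 w 1 := by
  simp [invCayley, poissonKernel_eq_re_herglotzRieszKernel, herglotzRieszKernel_def]

theorem ne_one_of_mem_unitBall {w : ℂ} (hw : w ∈ ball 0 1) : w ≠ 1 := by
  rintro rfl
  simp at hw

theorem im_invCayley_pos {w : ℂ} (hw : w ∈ ball 0 1) : 0 < (invCayley w).im := by
  have hne : 1 - w ≠ 0 := sub_ne_zero.2 (ne_one_of_mem_unitBall hw).symm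
  have hw_sq : ‖w‖ ^ 2 < 1 := by simpa using hw
  rw [im_invCayley, poissonKernel_def]
  simp only [sub_zero, norm_one, one_pow]
  exact div_pos (sub_pos.2 hw_sq) (by positivity)

theorem ofReal_re_invCayley {ζ : ℂ} (hζ : ‖ζ‖ = 1) : ((invCayley ζ).re : ℂ) = invCayley ζ := by
  refine Complex.ext rfl ?_
  simp [im_invCayley, poissonKernel_def, hζ]

theorem analyticAt_invCayley {w : ℂ} (hw : w ≠ 1) : AnalyticAt ℂ invCayley w := by
  have := sub_ne_zero.2 hw.symm
  unfold invCayley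
  fun_prop (disch := assumption)

theorem exists_mem_ball_invCayley_eq {z : ℂ} (hz : 0 < z.im) :
    ∃ w ∈ ball (0 : ℂ) 1, invCayley w = z := by
  have hne : z + Complex.I ≠ 0 := by
    intro h
    have him : z.im + 1 = 0 := by simpa using congrArg Complex.im h
    linarith
  refine ⟨(z - Complex.I) / (z + Complex.I), ?_, ?_⟩
  · rw [mem_ball_zero_iff, norm_div, div_lt_one (norm_pos_iff.2 hne),
      ← sq_lt_sq₀ (norm_nonneg _) (norm_nonneg _), ← Complex.normSq_eq_norm_sq,
      ← Complex.normSq_eq_norm_sq, Complex.normSq_apply, Complex.normSq_apply]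
    simp only [Complex.sub_re, Complex.sub_im, Complex.add_re, Complex.add_im, Complex.I_re,
      Complex.I_im]
    linarith
  · have hadd : z + Complex.I + (z - Complex.I) = 2 * z := by ring
    have hsub : z + Complex.I - (z - Complex.I) = 2 * Complex.I := by ring
    rw [invCayley, one_add_div hne, one_sub_div hne, div_div_div_cancel_right₀ hne, hadd, hsub]
    field_simp

theorem invCayley_sub_invCayley {w ζ : ℂ} (hw : w ≠ 1) (hζ : ζ ≠ 1) :
    invCayley w - invCayley ζ = 2 * Complex.I * (w - ζ) / ((1 - w) * (1 - ζ)) := by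
  have hw' := sub_ne_zero.2 hw.symm
  have hζ' := sub_ne_zero.2 hζ.symm
  unfold invCayley
  field_simp
  ring

theorem halfPlanePoissonKernel_invCayley {w ζ : ℂ} (hw : w ≠ 1) (hζ : ‖ζ‖ = 1) (hζ1 : ζ ≠ 1) :
    4 * Real.pi / ‖1 - ζ‖ ^ 2 * halfPlanePoissonKernel (invCayley w) (invCayley ζ).re
      = poissonKernel 0 w ζ := by
  have hw' : ‖1 - w‖ ≠ 0 := norm_ne_zero_iff.2 (sub_ne_zero.2 hw.symm)
  have hζ' : ‖1 - ζ‖ ≠ 0 := norm_ne_zero_iff.2 (sub_ne_zero.2 hζ1.symm)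
  rw [halfPlanePoissonKernel, ofReal_re_invCayley hζ, invCayley_sub_invCayley hw hζ1, im_invCayley,
    poissonKernel_def, poissonKernel_def]
  simp only [sub_zero, norm_one, hζ, norm_div, norm_mul, Complex.norm_I, Complex.norm_ofNat,
    norm_sub_rev ζ w]
  field_simp
  ring

theorem exists_measure_integral_poissonKernel_eq (ν : Measure (sphere (0 : ℂ) 1))
    [IsFiniteMeasure ν] :
    ∃ (a : ℝ) (μ : Measure ℝ), 0 ≤ a ∧ ∀ w ∈ ball (0 : ℂ) 1,
      Integrable (halfPlanePoissonKernel (invCayley w)) μ ∧ ∫ ζ, poissonKernel 0 w ζ ∂ν =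
        a * (invCayley w).im + ∫ u, halfPlanePoissonKernel (invCayley w) u ∂μ := by
  let one : sphere (0 : ℂ) 1 := ⟨1, by simp⟩
  -- `ρ ζ = π * (1 + u ^ 2)` at `u = invCayley ζ`, the weight comparing the two Poisson kernels.
  let ρ (ζ : sphere (0 : ℂ) 1) : ℝ := 4 * Real.pi / ‖1 - (ζ : ℂ)‖ ^ 2
  let τ : Measure (sphere (0 : ℂ) 1) := (ν.restrict {one}ᶜ).withDensity fun ζ ↦ ENNReal.ofReal (ρ ζ)
  let g (ζ : sphere (0 : ℂ) 1) : ℝ := (invCayley ζ).re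
  have hρ : Measurable ρ := by fun_prop
  have hg : Measurable g := by unfold g invCayley; fun_prop
  refine ⟨ν.real {one}, τ.map g, measureReal_nonneg, fun w hw ↦ ?_⟩
  have hint : Integrable (fun ζ : sphere (0 : ℂ) 1 ↦ poissonKernel 0 w ζ) ν :=
    (continuousOn_iff_continuous_domRestrict.1
      (continuousOn_poissonKernel_sphere hw)).integrable_of_hasCompactSupport (.of_compactSpace _)
  have hP : AEStronglyMeasurable (halfPlanePoissonKernel (invCayley w)) (τ.map g) :=
    (continuous_halfPlanePoissonKernel (im_invCayley_pos hw).ne').aestronglyMeasurable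
  have hker : (fun ζ ↦ (ENNReal.ofReal (ρ ζ)).toReal • halfPlanePoissonKernel (invCayley w) (g ζ))
      =ᵐ[ν.restrict {one}ᶜ] fun ζ ↦ poissonKernel 0 w ζ := by
    filter_upwards [ae_restrict_mem (measurableSet_singleton one).compl] with ζ hζ
    rw [ENNReal.toReal_ofReal (by positivity), smul_eq_mul]
    exact halfPlanePoissonKernel_invCayley (ne_one_of_mem_unitBall hw)
      (mem_sphere_zero_iff_norm.1 ζ.2) fun h ↦ hζ (Subtype.ext h)
  constructor
  · rw [integrable_map_measure hP hg.aemeasurable,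
      integrable_withDensity_iff_integrable_smul' hρ.ennreal_ofReal (by simp)]
    exact hint.restrict.congr hker.symm
  · rw [integral_map hg.aemeasurable hP,
      integral_withDensity_eq_integral_toReal_smul hρ.ennreal_ofReal (by simp),
      integral_congr_ae hker, im_invCayley,
      ← integral_add_compl (measurableSet_singleton one) hint, integral_singleton, smul_eq_mul]

theorem exists_measure_eq_mul_im_add_integral_halfPlanePoissonKernel {f : ℂ → ℝ}
    (hf : HarmonicOnNhd f {z | 0 < z.im}) (hf0 : ∀ z : ℂ, 0 < z.im → 0 ≤ f z) :
    ∃ (a : ℝ) (μ : Measure ℝ), 0 ≤ a ∧ ∀ z : ℂ, 0 < z.im →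
      Integrable (halfPlanePoissonKernel z) μ ∧
        f z = a * z.im + ∫ u, halfPlanePoissonKernel z u ∂μ := by
  obtain ⟨ν, hν, hrep⟩ := exists_measure_eq_integral_poissonKernel (f := f ∘ invCayley) one_pos
    (fun w hw ↦ harmonicAt_comp_analyticAt (hf _ (im_invCayley_pos hw))
      (analyticAt_invCayley (ne_one_of_mem_unitBall hw)))
    (fun w hw ↦ hf0 _ (im_invCayley_pos hw))
  obtain ⟨a, μ, ha, hμ⟩ := exists_measure_integral_poissonKernel_eq ν
  refine ⟨a, μ, ha, fun z hz ↦ ?_⟩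
  obtain ⟨w, hw, rfl⟩ := exists_mem_ball_invCayley_eq hz
  exact ⟨(hμ w hw).1, (hrep w hw).trans (hμ w hw).2⟩

theorem measure_univ_le_of_frequently_lintegral_halfPlanePoissonKernel_le {μ : Measure ℝ}
    {C : ℝ≥0∞} (h : ∃ᶠ y : ℝ in atTop,
      ∫⁻ u, ENNReal.ofReal (Real.pi * y * halfPlanePoissonKernel ⟨0, y⟩ u) ∂μ ≤ C) :
    μ Set.univ ≤ C := by
  have hker (y u : ℝ) :
      Real.pi * y * halfPlanePoissonKernel ⟨0, y⟩ u = y ^ 2 / (u ^ 2 + y ^ 2) := by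
    rw [halfPlanePoissonKernel_mk, zero_sub, neg_sq]
    field_simp
  simp only [hker] at h
  have hlim (u : ℝ) :
      Tendsto (fun y : ℝ ↦ ENNReal.ofReal (y ^ 2 / (u ^ 2 + y ^ 2))) atTop (𝓝 1) := by
    rw [← ENNReal.ofReal_one]
    refine ENNReal.tendsto_ofReal ?_
    have hu : Tendsto (fun y : ℝ ↦ 1 - u ^ 2 / (u ^ 2 + y ^ 2)) atTop (𝓝 (1 - 0)) :=
      tendsto_const_nhds.sub (tendsto_const_nhds.div_atTop
        (tendsto_atTop_add_const_left _ _ (tendsto_pow_atTop two_ne_zero)))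
    rw [sub_zero] at hu
    refine hu.congr' ((eventually_gt_atTop 0).mono fun y hy ↦ ?_)
    field_simp
    ring
  calc μ Set.univ
      = ∫⁻ u, liminf (fun y : ℝ ↦ ENNReal.ofReal (y ^ 2 / (u ^ 2 + y ^ 2))) atTop ∂μ := by
        simp [(hlim _).liminf_eq]
    _ ≤ liminf (fun y : ℝ ↦ ∫⁻ u, ENNReal.ofReal (y ^ 2 / (u ^ 2 + y ^ 2)) ∂μ) atTop :=
        lintegral_liminf_le' fun y ↦ by fun_prop
    _ ≤ C := liminf_le_of_frequently_le' h

theorem nonpos_of_frequently_mul_le_div {a C : ℝ} (h : ∃ᶠ y : ℝ in atTop, a * y ≤ C / y) :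
    a ≤ 0 := by
  have hlim : Tendsto (fun y : ℝ ↦ C / y ^ 2) atTop (𝓝 0) :=
    tendsto_const_nhds.div_atTop (tendsto_pow_atTop two_ne_zero)
  refine ge_of_tendsto_of_frequently hlim ((h.and_eventually (eventually_gt_atTop 0)).mono ?_)
  rintro y ⟨hay, hy⟩
  rwa [le_div_iff₀ (by positivity), sq, ← mul_assoc, ← le_div_iff₀ hy]

theorem exists_isFiniteMeasure_eq_integral_halfPlanePoissonKernel {f : ℂ → ℝ} {C : ℝ}
    (hf : HarmonicOnNhd f {z | 0 < z.im}) (hf0 : ∀ z : ℂ, 0 < z.im → 0 ≤ f z)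
    (hbdd : ∃ᶠ y : ℝ in atTop, f ⟨0, y⟩ ≤ C / y) :
    ∃ μ : Measure ℝ, IsFiniteMeasure μ ∧
      ∀ z : ℂ, 0 < z.im → f z = ∫ u, halfPlanePoissonKernel z u ∂μ := by
  obtain ⟨a, μ, ha, hrep⟩ := exists_measure_eq_mul_im_add_integral_halfPlanePoissonKernel hf hf0
  have hpos : ∀ᶠ y : ℝ in atTop, 0 < y := eventually_gt_atTop 0
  have ha_le : a ≤ 0 :=
    nonpos_of_frequently_mul_le_div <| (hbdd.and_eventually hpos).mono fun y ⟨hC, hy⟩ ↦ by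
      have hint : 0 ≤ ∫ u, halfPlanePoissonKernel ⟨0, y⟩ u ∂μ :=
        integral_nonneg fun u ↦ halfPlanePoissonKernel_nonneg hy.le u
      calc a * y ≤ a * y + ∫ u, halfPlanePoissonKernel ⟨0, y⟩ u ∂μ := le_add_of_nonneg_right hint
        _ = f ⟨0, y⟩ := (hrep ⟨0, y⟩ hy).2.symm
        _ ≤ C / y := hC
  obtain rfl : a = 0 := ha_le.antisymm ha
  simp only [zero_mul, zero_add] at hrep
  refine ⟨μ, ⟨lt_of_le_of_lt
    (measure_univ_le_of_frequently_lintegral_halfPlanePoissonKernel_le (C := ENNReal.ofReal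
      (Real.pi * C)) ?_) ENNReal.ofReal_lt_top⟩, fun z hz ↦ (hrep z hz).2⟩
  refine (hbdd.and_eventually hpos).mono fun y ⟨hC, hy⟩ ↦ ?_
  rw [← ofReal_integral_eq_lintegral_ofReal ((hrep ⟨0, y⟩ hy).1.const_mul _)
    (ae_of_all _ fun u ↦ mul_nonneg (by positivity) (halfPlanePoissonKernel_nonneg hy.le u)),
    integral_const_mul, ← (hrep ⟨0, y⟩ hy).2, mul_assoc]
  gcongr
  rwa [← le_div_iff₀' hy]

theorem cauchyPDFReal_eq_halfPlanePoissonKernel (u : ℝ) (γ : ℝ≥0) (x : ℝ) :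
    cauchyPDFReal u γ x = halfPlanePoissonKernel ⟨x, γ⟩ u := by
  rw [cauchyPDFReal_def, halfPlanePoissonKernel_mk]
  ring

theorem conv_withDensity {G : Type*} [AddGroup G] [MeasurableSpace G] [MeasurableAdd₂ G]
    [MeasurableNeg G] (μ κ : Measure G) [SFinite μ] [SFinite κ] [κ.IsAddLeftInvariant]
    {g : G → ℝ≥0∞} (hg : Measurable g) :
    μ ∗ κ.withDensity g = κ.withDensity fun x ↦ ∫⁻ u, g (-u + x) ∂μ := by
  refine Measure.ext_of_lintegral _ fun φ hφ ↦ ?_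
  calc ∫⁻ x, φ x ∂(μ ∗ κ.withDensity g)
      = ∫⁻ u, ∫⁻ x, g x * φ (u + x) ∂κ ∂μ := by
        rw [Measure.lintegral_conv hφ]
        exact lintegral_congr fun u ↦ lintegral_withDensity_eq_lintegral_mul _ hg (by fun_prop)
    _ = ∫⁻ u, ∫⁻ x, g (-u + x) * φ x ∂κ ∂μ := by
        refine lintegral_congr fun u ↦ ?_
        simpa using lintegral_add_left_eq_self (μ := κ) (fun x ↦ g (-u + x) * φ x) u
    _ = ∫⁻ x, (∫⁻ u, g (-u + x) ∂μ) * φ x ∂κ := by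
        rw [lintegral_lintegral_swap (by fun_prop)]
        exact lintegral_congr fun x ↦ lintegral_mul_const _ (by fun_prop)
    _ = ∫⁻ x, φ x ∂κ.withDensity fun x ↦ ∫⁻ u, g (-u + x) ∂μ :=
        (lintegral_withDensity_eq_lintegral_mul _ (by fun_prop) hφ).symm

theorem mul_cauchyPDF_mul (x₀ : ℝ) (γ : ℝ≥0) {c : ℝ≥0} (hc : c ≠ 0) (x : ℝ) :
    c * cauchyPDF (c * x₀) (c * γ) (c * x) = cauchyPDF x₀ γ x := by
  have hc' : (c : ℝ) ≠ 0 := NNReal.coe_ne_zero.2 hc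
  rw [cauchyPDF_def, cauchyPDF_def, ← ENNReal.ofReal_coe_nnreal, ← ENNReal.ofReal_mul c.coe_nonneg]
  simp only [cauchyPDFReal_def', NNReal.coe_inv, NNReal.coe_mul]
  field_simp

theorem map_mul_cauchyMeasure (x₀ : ℝ) (γ c : ℝ≥0) :
    (cauchyMeasure x₀ γ).map ((c : ℝ) * ·) = cauchyMeasure (c * x₀) (c * γ) := by
  rcases eq_or_ne c 0 with rfl | hc
  · simp
  rcases eq_or_ne γ 0 with rfl | hγ
  · simp
  refine Measure.ext_of_lintegral _ fun φ hφ ↦ ?_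
  let q : ℝ → ℝ≥0∞ := cauchyPDF (c * x₀) (c * γ) * φ
  have hq : Measurable q := (measurable_cauchyPDF _ _).mul hφ
  have hc_abs : ENNReal.ofReal |(c : ℝ)⁻¹| = (c : ℝ≥0∞)⁻¹ := by
    rw [abs_of_nonneg (by positivity), ENNReal.ofReal_inv_of_pos (by positivity),
      ENNReal.ofReal_coe_nnreal]
  calc ∫⁻ x, φ x ∂(cauchyMeasure x₀ γ).map ((c : ℝ) * ·)
      = ∫⁻ x, c * q (c * x) := by
        rw [lintegral_map hφ (by fun_prop), cauchyMeasure_of_scale_ne_zero _ hγ,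
          lintegral_withDensity_eq_lintegral_mul _ (measurable_cauchyPDF _ _) (by fun_prop)]
        simp only [Pi.mul_apply, q, ← mul_assoc, mul_cauchyPDF_mul _ _ hc]
    _ = c * ∫⁻ x, q x ∂volume.map ((c : ℝ) * ·) := by
        rw [lintegral_const_mul _ (by fun_prop), lintegral_map hq (by fun_prop)]
    _ = ∫⁻ x, q x := by
        rw [Real.map_volume_mul_left (by positivity), lintegral_smul_measure, hc_abs, smul_eq_mul,
          ENNReal.mul_inv_cancel_left (by positivity) ENNReal.coe_ne_top]
    _ = ∫⁻ x, φ x ∂cauchyMeasure (c * x₀) (c * γ) := by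
        rw [cauchyMeasure_of_scale_ne_zero _ (mul_ne_zero hc hγ),
          lintegral_withDensity_eq_lintegral_mul _ (measurable_cauchyPDF _ _) hφ]

theorem conv_cauchyMeasure (μ : Measure ℝ) [IsFiniteMeasure μ] {γ : ℝ≥0} (hγ : γ ≠ 0) :
    μ ∗ cauchyMeasure 0 γ =
      volume.withDensity fun x ↦ ENNReal.ofReal (∫ u, halfPlanePoissonKernel ⟨x, γ⟩ u ∂μ) := by
  rw [cauchyMeasure_of_scale_ne_zero 0 hγ, conv_withDensity μ _ (measurable_cauchyPDF 0 γ)]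
  congr 1 with x
  rw [ofReal_integral_eq_lintegral_ofReal
    (integrable_halfPlanePoissonKernel μ (z := ⟨x, γ⟩) (NNReal.coe_ne_zero.2 hγ))
    (ae_of_all _ fun u ↦ halfPlanePoissonKernel_nonneg γ.2 u)]
  refine lintegral_congr fun u ↦ ?_
  rw [cauchyPDF_def, ← cauchyPDFReal_eq_halfPlanePoissonKernel, cauchyPDFReal_def,
    cauchyPDFReal_def, sub_zero, neg_add_eq_sub]

theorem tendsto_charFun_cauchyMeasure_zero (t : ℝ) :
    Tendsto (fun γ ↦ charFun (cauchyMeasure 0 γ) t) (𝓝 0) (𝓝 1) := by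
  have hscale (γ : ℝ≥0) :
      charFun (cauchyMeasure 0 γ) t = charFun (cauchyMeasure 0 1) (γ * t) := by
    rw [← charFun_map_mul, map_mul_cauchyMeasure, mul_zero, mul_one]
  have hcont : Continuous fun γ : ℝ≥0 ↦ charFun (cauchyMeasure 0 1) (γ * t) :=
    continuous_charFun.comp (by fun_prop)
  simpa [hscale] using hcont.tendsto 0

theorem ext_of_integral_halfPlanePoissonKernel {μ ν : Measure ℝ} [IsFiniteMeasure μ]
    [IsFiniteMeasure ν] (h : ∀ z : ℂ, 0 < z.im →
      ∫ u, halfPlanePoissonKernel z u ∂μ = ∫ u, halfPlanePoissonKernel z u ∂ν) :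
    μ = ν := by
  refine Measure.ext_of_charFun (funext fun t ↦ ?_)
  obtain ⟨γ, hne, hγ⟩ : ∃ γ : ℝ≥0, charFun (cauchyMeasure 0 γ) t ≠ 0 ∧ 0 < γ :=
    ((((tendsto_charFun_cauchyMeasure_zero t).mono_left nhdsWithin_le_nhds).eventually_ne
      one_ne_zero).and (self_mem_nhdsWithin (s := Set.Ioi 0))).exists
  have hconv : μ ∗ cauchyMeasure 0 γ = ν ∗ cauchyMeasure 0 γ := by
    rw [conv_cauchyMeasure μ hγ.ne', conv_cauchyMeasure ν hγ.ne']
    congr 1 with x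
    rw [h ⟨x, γ⟩ (mod_cast hγ)]
  refine mul_right_cancel₀ hne ?_
  rw [← charFun_conv, ← charFun_conv, hconv]

theorem herglotz_positive_harmonic_general
    (U : ℝ → ℝ → ℝ) (C : ℝ)
    (hpos : ∀ x y : ℝ, 0 < y → 0 ≤ U x y)
    (hC2 : ContDiffOn ℝ 2 (fun p : ℝ × ℝ ↦ U p.1 p.2) {p : ℝ × ℝ | 0 < p.2})
    (hharm : ∀ x y : ℝ, 0 < y →
      iteratedDeriv 2 (fun s : ℝ ↦ U s y) x + iteratedDeriv 2 (fun t : ℝ ↦ U x t) y = 0)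
    (hbdd : ∃ᶠ y : ℝ in atTop, U 0 y ≤ C / y) :
    ∃! μ : Measure ℝ, IsFiniteMeasure μ ∧
      ∀ x y : ℝ, 0 < y →
        U x y = (1 / Real.pi) * ∫ u : ℝ, y / ((x - u) ^ 2 + y ^ 2) ∂μ := by
  have hf : HarmonicOnNhd (fun z : ℂ ↦ U z.re z.im) {z | 0 < z.im} :=
    harmonicOnNhd_of_iteratedDeriv_two_add_eq_zero (isOpen_lt continuous_const continuous_snd) hC2
      fun p hp ↦ hharm p.1 p.2 hp
  obtain ⟨μ, hμ, hrep⟩ := exists_isFiniteMeasure_eq_integral_halfPlanePoissonKernel hf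
    (fun z hz ↦ hpos z.re z.im hz) hbdd
  simp only [← integral_const_mul, ← halfPlanePoissonKernel_mk]
  refine ⟨μ, ⟨hμ, fun x y hy ↦ hrep ⟨x, y⟩ hy⟩, fun μ' ⟨hμ', hrep'⟩ ↦ ?_⟩
  exact ext_of_integral_halfPlanePoissonKernel fun z hz ↦
    (hrep' z.re z.im hz).symm.trans (hrep z hz)

/-- Herglotz representation theorem for positive harmonic functions on the
upper half-plane: a nonnegative harmonic function `U` on `ℂ₊` satisfying
`U(x+iy) ≤ C/y` is the Poisson integral of a unique finite positive Borel
measure on `ℝ`. -/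
theorem herglotz_positive_harmonic
    (U : ℝ → ℝ → ℝ) (C : ℝ) (hC : 0 < C)
    (hpos : ∀ x y : ℝ, 0 < y → 0 ≤ U x y)
    (hC2 : ContDiffOn ℝ 2 (fun p : ℝ × ℝ => U p.1 p.2) {p : ℝ × ℝ | 0 < p.2})
    (hharm : ∀ x y : ℝ, 0 < y →
      iteratedDeriv 2 (fun s : ℝ => U s y) x + iteratedDeriv 2 (fun t : ℝ => U x t) y = 0)
    (hbdd : ∀ x y : ℝ, 0 < y → U x y ≤ C / y) :
    ∃! μ : Measure ℝ, IsFiniteMeasure μ ∧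
      ∀ x y : ℝ, 0 < y →
        U x y = (1 / Real.pi) * ∫ u : ℝ, y / ((x - u) ^ 2 + y ^ 2) ∂μ :=
  herglotz_positive_harmonic_general U C hpos hC2 hharm
    ((eventually_gt_atTop 0).mono fun y hy ↦ hbdd 0 y hy).frequently
end

section
/- For a function f : ℝ → ℂ the following are equivalent: (i) f is continuous and positive definite, i.e. for every n ≥ 1, all points x₁,…,xₙ ∈ ℝ and all scalars c₁,…,cₙ ∈ ℂ one has Σ_{j,k=1}^n f(x_k − x_j) c_j conj(c_k) ∈ [0,∞); (ii) there exists a finite positive Borel measure μ on ℝ such that f(ω) = ∫_ℝ e^{−iωx} dμ(x) for all ω ∈ ℝ. -/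
open MeasureTheory

/-! A continuous positive definite function `f` that is moreover integrable has a nonnegative
Fourier transform: averaging the positivity condition over independent random points `x₁, …, xₙ`
with law `γ` and letting `n → ∞` gives `0 ≤ ∫∫ f (x - y) dγ dγ`, and wide Gaussian laws `γ` turn
this into `0 ≤ ∫ f`; multiplying `f` by characters gives the other frequencies. A nonnegative
Fourier transform is automatically integrable, because its Gaussian means converge to `f 0`, so by
Fourier inversion it is, up to scaling, the density of a measure with characteristic function `f`.
For general `f` with `f 0 = 1`, multiplying by the characteristic functions of Gaussians shrinking
to `0` yields integrable approximations of `f`, hence probability measures; their characteristic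
functions converge to `f`, which is continuous at `0`, so they are tight and any limit point has
characteristic function `f`. -/

open ProbabilityTheory Filter Topology Complex
open scoped ComplexOrder ComplexConjugate FourierTransform RealInnerProductSpace

lemma lintegral_enorm_eq_enorm_integral_of_nonneg {Ω 𝕜 : Type*} [MeasurableSpace Ω] [RCLike 𝕜]
    {μ : Measure Ω} {g : Ω → 𝕜} (hgi : Integrable g μ) (hg : ∀ a, 0 ≤ g a) :
    ∫⁻ a, ‖g a‖ₑ ∂μ = ‖∫ a, g a ∂μ‖ₑ := by
  have hnorm : ∫ a, g a ∂μ = ((∫ a, ‖g a‖ ∂μ : ℝ) : 𝕜) := by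
    rw [← integral_ofReal]
    simp_rw [RCLike.norm_of_nonneg' (hg _)]
  rw [hnorm, ← ofReal_integral_norm_eq_lintegral_enorm hgi, ← ofReal_norm, RCLike.norm_ofReal,
    abs_of_nonneg (integral_nonneg fun _ ↦ norm_nonneg _)]

lemma measurePreserving_eval_prodMk {ι : Type*} [Fintype ι] {X : ι → Type*}
    [∀ i, MeasurableSpace (X i)] (μ : ∀ i, Measure (X i)) [∀ i, IsProbabilityMeasure (μ i)]
    {i j : ι} (hij : i ≠ j) :
    MeasurePreserving (fun x : ∀ i, X i ↦ (x i, x j)) (Measure.pi μ) ((μ i).prod (μ j)) := by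
  refine ⟨by fun_prop, ?_⟩
  have hindep := (iIndepFun_pi (μ := μ) (X := fun _ ↦ id) fun _ ↦ aemeasurable_id).indepFun hij
  rw [← (measurePreserving_eval μ i).map_eq, ← (measurePreserving_eval μ j).map_eq]
  exact (indepFun_iff_map_prod_eq_prod_map_map (measurable_pi_apply i).aemeasurable
    (measurable_pi_apply j).aemeasurable).1 hindep

lemma integrable_rexp_neg_mul_sq_norm {V : Type*} [NormedAddCommGroup V] [InnerProductSpace ℝ V]
    [FiniteDimensional ℝ V] [MeasurableSpace V] [BorelSpace V] {b : ℝ} (hb : 0 < b) :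
    Integrable fun v : V ↦ Real.exp (-b * ‖v‖ ^ 2) := by
  have h := GaussianFourier.integrable_cexp_neg_mul_sq_norm_add (V := V) (b := b) (by simpa) 0 0
  refine h.re.congr (ae_of_all _ fun v ↦ ?_)
  simp only [zero_mul, add_zero]
  norm_cast

lemma charFun_neg_eq_integral {V : Type*} [NormedAddCommGroup V] [InnerProductSpace ℝ V]
    [MeasurableSpace V] (μ : Measure V) (ω : V) :
    charFun μ (-ω) = ∫ x, cexp (-(I * ⟪ω, x⟫)) ∂μ := by
  rw [charFun_apply]
  congr! 3 with x
  rw [inner_neg_right, real_inner_comm, ofReal_neg, neg_mul, mul_comm]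

lemma isProbabilityMeasure_of_charFun_zero_eq_one {V : Type*} [SeminormedAddCommGroup V]
    [InnerProductSpace ℝ V] [MeasurableSpace V] {μ : Measure V} (h : charFun μ 0 = 1) :
    IsProbabilityMeasure μ := by
  rw [isProbabilityMeasure_iff_real]
  exact_mod_cast (charFun_zero μ).symm.trans h

/-- Positive definiteness of a complex-valued function on an additive group: all the matrices
`(f (x k - x j))` are positive semidefinite. In the order on `ℂ`, `0 ≤ z` says that `z` is real and
nonnegative. -/
def IsPositiveDefinite {G : Type*} [AddGroup G] (f : G → ℂ) : Prop :=
  ∀ (n : ℕ) (x : Fin n → G) (c : Fin n → ℂ), 0 ≤ ∑ j, ∑ k, f (x k - x j) * c j * conj (c k)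

namespace IsPositiveDefinite

section AddGroup

variable {G : Type*} [AddGroup G] {f : G → ℂ}

lemma apply_zero_nonneg (hf : IsPositiveDefinite f) : 0 ≤ f 0 := by
  simpa using hf 1 (fun _ ↦ 0) (fun _ ↦ 1)

lemma two_point_nonneg (hf : IsPositiveDefinite f) (x : G) {b : ℂ} (hb : ‖b‖ = 1) :
    0 ≤ 2 * f 0 + f x * conj b + f (-x) * b := by
  have hbb : b * conj b = 1 := by simp [mul_conj', hb]
  convert! hf 2 ![0, x] ![1, b] using 1
  simp only [Fin.sum_univ_two, Matrix.cons_val_zero, Matrix.cons_val_one, sub_self, sub_zero,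
    zero_sub, neg_zero, map_one, mul_one]
  linear_combination -f 0 * hbb

protected lemma map_neg (hf : IsPositiveDefinite f) (x : G) : f (-x) = conj (f x) := by
  obtain ⟨-, h0⟩ := nonneg_iff.1 hf.apply_zero_nonneg
  obtain ⟨-, h1⟩ := nonneg_iff.1 (hf.two_point_nonneg x (b := 1) (by simp))
  obtain ⟨-, hI⟩ := nonneg_iff.1 (hf.two_point_nonneg x (b := I) (by simp))
  have him : (f (-x)).im = -(f x).im := by
    have h : 0 = (f x).im + (f (-x)).im := by simpa [← h0] using h1
    linarith
  have hre : (f (-x)).re = (f x).re := by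
    have h : 0 = -(f x).re + (f (-x)).re := by simpa [← h0] using hI
    linarith
  exact Complex.ext (by simpa using hre) (by simpa using him)

lemma norm_apply_le (hf : IsPositiveDefinite f) (x : G) : ‖f x‖ ≤ (f 0).re := by
  set u := cexp (arg (f x) * I)
  have hnorm : ‖u‖ = 1 := norm_exp_ofReal_mul_I _
  have hpolar : f x * conj u = ‖f x‖ := by
    conv_lhs => rw [← norm_mul_exp_arg_mul_I (f x), mul_assoc, mul_conj', hnorm]
    simp
  have hpolar' : f (-x) * u = ‖f x‖ := by
    rw [hf.map_neg, ← conj_ofReal, ← hpolar, map_mul, conj_conj]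
  have h : 0 ≤ 2 * f 0 + -‖f x‖ + -‖f x‖ := by
    simpa [hpolar, hpolar'] using hf.two_point_nonneg x (b := -u) (by simpa)
  have hre : 0 ≤ 2 * (f 0).re + -‖f x‖ + -‖f x‖ := by simpa using (nonneg_iff.1 h).1
  linarith

lemma one : IsPositiveDefinite (fun _ : G ↦ 1) := by
  intro n x c
  simp_rw [one_mul, ← Finset.mul_sum, ← Finset.sum_mul, ← map_sum]
  exact mul_conj' (∑ j, c j) ▸ mod_cast sq_nonneg _

lemma const_mul (hf : IsPositiveDefinite f) {a : ℂ} (ha : 0 ≤ a) :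
    IsPositiveDefinite (fun x ↦ a * f x) := by
  intro n x c
  simp_rw [mul_assoc a, ← Finset.mul_sum]
  exact mul_nonneg ha (hf n x c)

protected lemma integral {Ω : Type*} [MeasurableSpace Ω] {μ : Measure Ω} {F : Ω → G → ℂ}
    (hF : ∀ a, IsPositiveDefinite (F a)) (hint : ∀ x, Integrable (F · x) μ) :
    IsPositiveDefinite (fun x ↦ ∫ a, F a x ∂μ) := by
  intro n x c
  have hint' (j k : Fin n) :
      Integrable (fun a ↦ F a (x k - x j) * c j * conj (c k)) μ :=
    ((hint _).mul_const _).mul_const _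
  simp_rw [← integral_mul_const, ← integral_finsetSum _ fun k _ ↦ hint' _ k]
  rw [← integral_finsetSum _ fun j _ ↦ integrable_finsetSum _ fun k _ ↦ hint' j k]
  exact integral_nonneg fun a ↦ hF a n x c

end AddGroup

lemma mul_addChar {G : Type*} [AddCommGroup G] {f : G → ℂ} (hf : IsPositiveDefinite f)
    (χ : AddChar G Circle) : IsPositiveDefinite (fun x ↦ f x * χ x) := by
  intro n x c
  refine (hf n x (fun j ↦ c j * conj (χ (x j) : ℂ))).trans_eq ?_
  refine Finset.sum_congr rfl fun j _ ↦ Finset.sum_congr rfl fun k _ ↦ ?_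
  have hχ : (χ (x k - x j) : ℂ) = χ (x k) * conj (χ (x j) : ℂ) := by
    rw [AddChar.map_sub_eq_div, Circle.coe_div, div_eq_mul_inv, ← Circle.coe_inv,
      Circle.coe_inv_eq_conj]
  simp only [hχ, map_mul, conj_conj]
  ring

section Measurable

variable {G : Type*} [AddGroup G] [MeasurableSpace G] {f : G → ℂ}

lemma integrable_comp (hf : IsPositiveDefinite f) (hfm : Measurable f) {Ω : Type*}
    [MeasurableSpace Ω] {μ : Measure Ω} [IsFiniteMeasure μ] {g : Ω → G} (hg : Measurable g) :
    Integrable (fun a ↦ f (g a)) μ :=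
  .of_bound (hfm.comp hg).aestronglyMeasurable (f 0).re (ae_of_all _ fun _ ↦ hf.norm_apply_le _)

variable [MeasurableSub₂ G]

lemma integral_pi_sum_sub (hf : IsPositiveDefinite f) (hfm : Measurable f) (γ : Measure G)
    [IsProbabilityMeasure γ] (n : ℕ) :
    ∫ x : Fin n → G, ∑ j, ∑ k, f (x k - x j) ∂(Measure.pi fun _ ↦ γ) =
      n * f 0 + n * (n - 1) * ∫ p, f (p.1 - p.2) ∂(γ.prod γ) := by
  set J := ∫ p, f (p.1 - p.2) ∂(γ.prod γ) with hJ
  have hint (j k : Fin n) : Integrable (fun x : Fin n → G ↦ f (x k - x j))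
      (Measure.pi fun _ ↦ γ) := hf.integrable_comp hfm (by fun_prop)
  have hpair (j k : Fin n) : ∫ x : Fin n → G, f (x k - x j) ∂(Measure.pi fun _ ↦ γ) =
      J + if j = k then f 0 - J else 0 := by
    split_ifs with hjk
    · simp [hjk]
    · have hmp := measurePreserving_eval_prodMk (fun _ ↦ γ) (Ne.symm hjk)
      rw [add_zero, hJ, ← hmp.map_eq, integral_map (by fun_prop)]
      exact (hfm.comp measurable_sub).aestronglyMeasurable
  rw [integral_finsetSum _ fun j _ ↦ integrable_finsetSum _ fun k _ ↦ hint j k]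
  simp_rw [integral_finsetSum _ fun k _ ↦ hint _ k, hpair, Finset.sum_add_distrib,
    Finset.sum_ite_eq, Finset.mem_univ, if_true, Finset.sum_const, Finset.card_univ,
    Fintype.card_fin, nsmul_eq_mul]
  ring

lemma integral_prod_sub_nonneg_of_isProbabilityMeasure (hf : IsPositiveDefinite f)
    (hfm : Measurable f) (γ : Measure G) [IsProbabilityMeasure γ] :
    0 ≤ ∫ p, f (p.1 - p.2) ∂(γ.prod γ) := by
  set J := ∫ p, f (p.1 - p.2) ∂(γ.prod γ)
  have hsum (n : ℕ) : 0 ≤ n * f 0 + n * (n - 1) * J := by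
    rw [← hf.integral_pi_sum_sub hfm]
    exact integral_nonneg fun x ↦ by simpa using hf n x (fun _ ↦ 1)
  have havg (n : ℕ) : 0 ≤ 1 / ((n : ℂ) + 1) * f 0 + J := by
    have h := mul_nonneg (a := (((n + 2) * (n + 1) : ℕ) : ℂ)⁻¹) (by positivity) (hsum (n + 2))
    refine h.trans_eq ?_
    have hn_one : (n : ℂ) + 1 ≠ 0 := by norm_cast
    have hn_two : (n : ℂ) + 2 ≠ 0 := by norm_cast
    push_cast
    field_simp
    ring
  refine ge_of_tendsto' (x := atTop) (f := fun n : ℕ ↦ 1 / ((n : ℂ) + 1) * f 0 + J) ?_ havg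
  simpa using (tendsto_one_div_add_atTop_nhds_zero_nat (𝕜 := ℂ)).mul_const (f 0) |>.add_const J

lemma integral_prod_sub_nonneg (hf : IsPositiveDefinite f) (hfm : Measurable f) (γ : Measure G)
    [IsFiniteMeasure γ] : 0 ≤ ∫ p, f (p.1 - p.2) ∂(γ.prod γ) := by
  rcases eq_zero_or_neZero γ with rfl | _
  · simp
  set P := (γ Set.univ)⁻¹ • γ
  have hγ : γ = γ Set.univ • P := by
    rw [smul_smul, ENNReal.mul_inv_cancel (NeZero.ne _) (measure_ne_top _ _), one_smul]
  rw [hγ, Measure.prod_smul_left, Measure.prod_smul_right, integral_smul_measure,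
    integral_smul_measure]
  have := hf.integral_prod_sub_nonneg_of_isProbabilityMeasure hfm P
  positivity

lemma integral_autocorrelation_mul_nonneg [MeasurableAdd₂ G] (hf : IsPositiveDefinite f)
    (hfm : Measurable f) {ν : Measure G} [SFinite ν] [ν.IsAddRightInvariant] {φ : G → ℝ}
    (hφ : ∀ x, 0 ≤ φ x) (hφm : Measurable φ) (hφi : Integrable φ ν) :
    0 ≤ ∫ u, ((∫ y, φ (u + y) * φ y ∂ν : ℝ) : ℂ) * f u ∂ν := by
  set γ := ν.withDensity fun x ↦ ENNReal.ofReal (φ x)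
  have : IsFiniteMeasure γ := isFiniteMeasure_withDensity_ofReal hφi.2
  have hγ (g : G → ℂ) : ∫ x, g x ∂γ = ∫ x, φ x * g x ∂ν := by
    rw [integral_withDensity_eq_integral_toReal_smul hφm.ennreal_ofReal
      (ae_of_all _ fun _ ↦ ENNReal.ofReal_lt_top)]
    congr! 2 with x
    rw [ENNReal.toReal_ofReal (hφ x), real_smul]
  have hint : Integrable (fun p : G × G ↦ (φ (p.1 + p.2) : ℂ) * φ p.2 * f p.1) (ν.prod ν) := by
    have hφ₂ : Integrable (fun p : G × G ↦ φ (p.1 + p.2) * φ p.2) (ν.prod ν) :=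
      (measurePreserving_add_prod ν ν).integrable_comp_of_integrable (hφi.mul_prod hφi)
    refine Integrable.mul_bdd (c := (f 0).re) (by exact_mod_cast hφ₂.ofReal (𝕜 := ℂ))
      (hfm.comp measurable_fst).aestronglyMeasurable (ae_of_all _ fun _ ↦ hf.norm_apply_le _)
  calc
    0 ≤ ∫ p, f (p.1 - p.2) ∂(γ.prod γ) := hf.integral_prod_sub_nonneg hfm γ
    _ = ∫ y, ∫ x, f (x - y) ∂γ ∂γ :=
      integral_prod_symm _ (hf.integrable_comp hfm measurable_sub)
    _ = ∫ y, ∫ x, φ x * φ y * f (x - y) ∂ν ∂ν := by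
      simp_rw [hγ, ← integral_const_mul]
      congr! 4
      ring
    _ = ∫ y, ∫ u, φ (u + y) * φ y * f u ∂ν ∂ν := by
      congr! 2 with y
      rw [← integral_add_right_eq_self _ y]
      simp_rw [add_sub_cancel_right]
    _ = ∫ u, ∫ y, φ (u + y) * φ y * f u ∂ν ∂ν := (integral_integral_swap hint).symm
    _ = ∫ u, ((∫ y, φ (u + y) * φ y ∂ν : ℝ) : ℂ) * f u ∂ν := by
      simp_rw [integral_mul_const, ← ofReal_mul, integral_complex_ofReal]

end Measurable

section InnerProductSpace

variable {V : Type*} [NormedAddCommGroup V] [InnerProductSpace ℝ V] {f : V → ℂ}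

lemma mul_addChar_inner (hf : IsPositiveDefinite f) (e : AddChar ℝ Circle) (w : V) :
    IsPositiveDefinite fun v ↦ f v * e ⟪w, v⟫ :=
  hf.mul_addChar (e.compAddMonoidHom (innerₗ V w).toAddMonoidHom)

lemma mul_charFun (hf : IsPositiveDefinite f) [MeasurableSpace V] [OpensMeasurableSpace V]
    (μ : Measure V) [IsFiniteMeasure μ] : IsPositiveDefinite fun t ↦ f t * charFun μ t := by
  simp_rw [charFun_eq_integral_probChar, ← integral_const_mul]
  refine .integral (hf.mul_addChar_inner Real.probChar) fun t ↦ ?_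
  have hχ : Continuous fun x : V ↦ (Real.probChar ⟪x, t⟫ : ℂ) := by fun_prop
  exact .const_mul (.of_bound hχ.aestronglyMeasurable 1
    (ae_of_all _ fun x ↦ (Circle.norm_coe _).le)) _

protected lemma charFun [MeasurableSpace V] [OpensMeasurableSpace V] (μ : Measure V)
    [IsFiniteMeasure μ] : IsPositiveDefinite (charFun μ) := by
  simpa using one.mul_charFun μ

end InnerProductSpace

section FiniteDimensional

variable {V : Type*} [NormedAddCommGroup V] [InnerProductSpace ℝ V] [FiniteDimensional ℝ V]
  [MeasurableSpace V] [BorelSpace V] {f : V → ℂ}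

lemma integral_cexp_neg_mul_sq_norm_mul_nonneg (hf : IsPositiveDefinite f) (hfm : Measurable f)
    {b : ℝ} (hb : 0 < b) : 0 ≤ ∫ u, cexp (-b * ‖u‖ ^ 2) * f u := by
  set φ : V → ℝ := fun x ↦ Real.exp (-(2 * b) * ‖x‖ ^ 2)
  set C : ℝ := ∫ y : V, Real.exp (-(4 * b) * ‖y‖ ^ 2) with hC
  have hC_pos : 0 < C := by
    rw [hC, GaussianFourier.integral_rexp_neg_mul_sq_norm (by positivity)]
    positivity
  have hsq (u y : V) : φ (u + y) * φ y =
      Real.exp (-b * ‖u‖ ^ 2) * Real.exp (-(4 * b) * ‖y + (2⁻¹ : ℝ) • u‖ ^ 2) := by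
    rw [← Real.exp_add, ← Real.exp_add, norm_add_sq_real, norm_add_sq_real, inner_smul_right,
      norm_smul, real_inner_comm]
    norm_num
    ring
  have hauto (u : V) : ∫ y, φ (u + y) * φ y = Real.exp (-b * ‖u‖ ^ 2) * C := by
    simp_rw [hsq, integral_const_mul]
    rw [integral_add_right_eq_self fun y ↦ Real.exp (-(4 * b) * ‖y‖ ^ 2)]
  have h := calc
    0 ≤ ∫ u, ((∫ y, φ (u + y) * φ y : ℝ) : ℂ) * f u :=
      hf.integral_autocorrelation_mul_nonneg hfm (fun _ ↦ (Real.exp_pos _).le) (by fun_prop)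
        (integrable_rexp_neg_mul_sq_norm (by positivity))
    _ = C * ∫ u, cexp (-b * ‖u‖ ^ 2) * f u := by
      rw [← integral_const_mul]
      congr! 2
      rw [hauto]
      push_cast
      ring
  exact le_of_mul_le_mul_left (by rwa [mul_zero]) (zero_lt_real.2 hC_pos)

protected lemma integral_nonneg (hf : IsPositiveDefinite f) (hfi : Integrable f)
    (hfm : Measurable f) : 0 ≤ ∫ v, f v := by
  refine ge_of_tendsto (Real.tendsto_integral_cexp_sq_smul hfi) ?_
  filter_upwards [eventually_gt_atTop 0] with c hc
  simpa using hf.integral_cexp_neg_mul_sq_norm_mul_nonneg hfm (inv_pos.2 hc)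

lemma fourier_nonneg (hf : IsPositiveDefinite f) (hfi : Integrable f) (hfm : Measurable f)
    (w : V) : 0 ≤ 𝓕 f w := by
  have hfourier : 𝓕 f w = ∫ v, f v * (Real.fourierChar ⟪-w, v⟫ : ℂ) := by
    rw [Real.fourier_eq]
    congr! 2 with v
    rw [inner_neg_left, real_inner_comm, Circle.smul_def, smul_eq_mul, mul_comm]
  have hχ : Continuous fun v ↦ (Real.fourierChar ⟪-w, v⟫ : ℂ) := by fun_prop
  rw [hfourier]
  exact (hf.mul_addChar_inner _ _).integral_nonneg
    (hfi.mul_bdd (c := 1) hχ.aestronglyMeasurable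
      (ae_of_all _ fun v ↦ (Circle.norm_coe _).le)) (hfm.mul hχ.measurable)

end FiniteDimensional

end IsPositiveDefinite

section FourierInversion

variable {V E : Type*} [NormedAddCommGroup V] [InnerProductSpace ℝ V] [FiniteDimensional ℝ V]
  [MeasurableSpace V] [BorelSpace V] [NormedAddCommGroup E] [NormedSpace ℂ E]

lemma tendsto_integral_cexp_sq_smul_fourier [CompleteSpace E] {f : V → E} (hfi : Integrable f)
    (hf0 : ContinuousAt f 0) :
    Tendsto (fun c : ℝ ↦ ∫ w : V, cexp (-c⁻¹ * ‖w‖ ^ 2) • 𝓕 f w) atTop (𝓝 (f 0)) := by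
  refine (Real.tendsto_integral_gaussian_smul' hfi hf0).congr' ?_
  filter_upwards [eventually_gt_atTop 0] with c hc
  have hre : 0 < ((c⁻¹ : ℝ) : ℂ).re := by simpa using hc
  have hgauss : Integrable fun w : V ↦ cexp (-(c⁻¹ : ℝ) * ‖w‖ ^ 2) := by
    exact_mod_cast (integrable_rexp_neg_mul_sq_norm (V := V) (inv_pos.2 hc)).ofReal (𝕜 := ℂ)
  calc
    _ = ∫ w : V, 𝓕 (fun v : V ↦ cexp (-(c⁻¹ : ℝ) * ‖v‖ ^ 2)) w • f w := by
      congr! 2 with w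
      rw [fourier_gaussian_innerProductSpace hre, zero_sub, norm_neg, ofReal_inv, div_inv_eq_mul,
        div_inv_eq_mul]
      ring_nf
    _ = ∫ w : V, cexp (-(c⁻¹ : ℝ) * ‖w‖ ^ 2) • 𝓕 f w := by
      simpa using! VectorFourier.integral_fourierIntegral_smul_eq_flip (L := innerₗ V)
        Real.continuous_fourierChar continuous_inner hgauss hfi
    _ = _ := by rw [ofReal_inv]

lemma integrable_fourier_of_nonneg {f : V → ℂ} (hfi : Integrable f) (hf0 : ContinuousAt f 0)
    (hf : ∀ w, 0 ≤ 𝓕 f w) : Integrable (𝓕 f) := by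
  have hcont : Continuous (𝓕 f) := VectorFourier.fourierIntegral_continuous
    Real.continuous_fourierChar continuous_inner hfi
  set c : ℕ → ℝ := fun n ↦ n + 1
  set F : ℕ → V → ℂ := fun n w ↦ cexp (-(c n)⁻¹ * ‖w‖ ^ 2) * 𝓕 f w
  have hc_pos (n : ℕ) : 0 < c n := n.cast_add_one_pos
  have hc_lim : Tendsto c atTop atTop :=
    tendsto_atTop_add_const_right _ 1 tendsto_natCast_atTop_atTop
  have hF_lim (w : V) : Tendsto (F · w) atTop (𝓝 (𝓕 f w)) := by
    have hinv := (continuous_ofReal.tendsto 0).comp (tendsto_inv_atTop_zero.comp hc_lim)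
    simpa [F] using! ((hinv.neg.mul_const ((‖w‖ : ℂ) ^ 2)).cexp).mul_const (𝓕 f w)
  have hF_nonneg (n : ℕ) (w : V) : 0 ≤ F n w := mul_nonneg (by norm_cast; positivity) (hf w)
  have hF_int (n : ℕ) : Integrable (F n) := by
    have hgauss := integrable_rexp_neg_mul_sq_norm (V := V) (inv_pos.2 (hc_pos n))
    refine Integrable.mul_bdd (c := ∫ v, ‖f v‖) (by exact_mod_cast hgauss.ofReal (𝕜 := ℂ))
      hcont.aestronglyMeasurable (ae_of_all _ fun w ↦ ?_)
    exact VectorFourier.norm_fourierIntegral_le_integral_norm _ _ _ _ _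
  have hF_integral : Tendsto (fun n ↦ ∫ w, F n w) atTop (𝓝 (f 0)) :=
    (tendsto_integral_cexp_sq_smul_fourier hfi hf0).comp hc_lim
  refine ⟨hcont.aestronglyMeasurable, ?_⟩
  calc
    ∫⁻ w, ‖𝓕 f w‖ₑ = ∫⁻ w, liminf (fun n ↦ ‖F n w‖ₑ) atTop := by
      simp_rw [((hF_lim _).enorm).liminf_eq]
    _ ≤ liminf (fun n ↦ ∫⁻ w, ‖F n w‖ₑ) atTop :=
      lintegral_liminf_le' fun n ↦ (hF_int n).aestronglyMeasurable.enorm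
    _ = ‖f 0‖ₑ := by
      simp_rw [lintegral_enorm_eq_enorm_integral_of_nonneg (hF_int _) (hF_nonneg _)]
      exact hF_integral.enorm.liminf_eq
    _ < ⊤ := enorm_lt_top

lemma exists_charFun_eq_of_fourier_nonneg {f : V → ℂ} (hfc : Continuous f) (hfi : Integrable f)
    (hf : ∀ w, 0 ≤ 𝓕 f w) : ∃ μ : Measure V, IsFiniteMeasure μ ∧ charFun μ = f := by
  have hFi := integrable_fourier_of_nonneg hfi hfc.continuousAt hf
  set ν : Measure V := volume.withDensity fun w ↦ ‖𝓕 f w‖ₑ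
  have : IsFiniteMeasure ν := isFiniteMeasure_withDensity hFi.2.ne
  refine ⟨ν.map ((2 * Real.pi) • ·), inferInstance, funext fun t ↦ ?_⟩
  calc
    charFun (ν.map ((2 * Real.pi) • ·)) t = ∫ w, cexp (⟪w, (2 * Real.pi) • t⟫ * I) ∂ν := by
      rw [charFun_map_smul, charFun_apply]
    _ = ∫ w, cexp (2 * Real.pi * ⟪w, t⟫ * I) • 𝓕 f w := by
      rw [integral_withDensity_eq_integral_toReal_smul₀ hFi.aestronglyMeasurable.enorm
        (ae_of_all _ fun _ ↦ enorm_lt_top)]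
      congr! 2 with w
      rw [toReal_enorm, real_smul, norm_of_nonneg' (hf w), inner_smul_right, smul_eq_mul, mul_comm]
      push_cast
      rfl
    _ = f t := by
      rw [← congrFun (hfc.fourierInv_fourier_eq hfi hFi) t, Real.fourierInv_eq']
      push_cast
      rfl

end FourierInversion

section Levy

variable {V : Type*} [NormedAddCommGroup V] [InnerProductSpace ℝ V] [FiniteDimensional ℝ V]
  [MeasurableSpace V] [BorelSpace V]

lemma exists_charFun_eq_of_tendsto_charFun {μ : ℕ → ProbabilityMeasure V} {f : V → ℂ}
    (hf0 : ContinuousAt f 0)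
    (hμ : ∀ t, Tendsto (fun n ↦ charFun (μ n : Measure V) t) atTop (𝓝 (f t))) :
    ∃ ν : ProbabilityMeasure V, charFun (ν : Measure V) = f := by
  have htight := isTightMeasureSet_of_tendsto_charFun hf0 hμ
  have hcompact : IsCompact (closure (Set.range μ)) :=
    isCompact_closure_of_isTightMeasureSet (by simpa [Set.range] using htight)
  obtain ⟨ν, -, φ, hφ, hν⟩ := hcompact.tendsto_subseq fun n ↦ subset_closure (Set.mem_range_self n)
  refine ⟨ν, funext fun t ↦ tendsto_nhds_unique ?_ ((hμ t).comp hφ.tendsto_atTop)⟩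
  exact ProbabilityMeasure.tendsto_iff_tendsto_charFun.1 hν t

end Levy

section Bochner

variable {V : Type*} [NormedAddCommGroup V] [InnerProductSpace ℝ V] [FiniteDimensional ℝ V]
  [MeasurableSpace V] [BorelSpace V] {f : V → ℂ}

lemma charFun_map_smul_stdGaussian (r : ℝ) (t : V) :
    charFun ((stdGaussian V).map (r • ·)) t = Real.exp (-(r ^ 2 / 2) * ‖t‖ ^ 2) := by
  rw [charFun_map_smul, charFun_stdGaussian, norm_smul, ofReal_mul, mul_pow, ← ofReal_pow,
    Real.norm_eq_abs, sq_abs]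
  push_cast
  ring_nf

namespace IsPositiveDefinite

lemma exists_charFun_eq_of_integrable (hf : IsPositiveDefinite f) (hfc : Continuous f)
    (hfi : Integrable f) (hf0 : f 0 = 1) :
    ∃ μ : ProbabilityMeasure V, charFun (μ : Measure V) = f := by
  obtain ⟨μ, -, hμ⟩ := exists_charFun_eq_of_fourier_nonneg hfc hfi
    (hf.fourier_nonneg hfi hfc.measurable)
  exact ⟨⟨μ, isProbabilityMeasure_of_charFun_zero_eq_one (hμ ▸ hf0)⟩, hμ⟩

lemma exists_charFun_eq_of_apply_zero_eq_one (hf : IsPositiveDefinite f) (hfc : Continuous f)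
    (hf0 : f 0 = 1) : ∃ μ : ProbabilityMeasure V, charFun (μ : Measure V) = f := by
  set r : ℕ → ℝ := fun n ↦ 1 / (n + 1)
  set γ : ℕ → Measure V := fun n ↦ (stdGaussian V).map (r n • ·)
  have hγ_int (n : ℕ) : Integrable (charFun (γ n)) := by
    have hr : 0 < r n ^ 2 / 2 := by positivity
    exact (integrable_rexp_neg_mul_sq_norm hr).ofReal.congr
      (ae_of_all _ fun t ↦ (charFun_map_smul_stdGaussian (r n) t).symm)
  have hγ_lim (t : V) : Tendsto (fun n ↦ charFun (γ n) t) atTop (𝓝 1) := by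
    have hr : Tendsto r atTop (𝓝 0) := tendsto_one_div_add_atTop_nhds_zero_nat
    have hcont : Continuous fun s : ℝ ↦ charFun (stdGaussian V) (s • t) := by fun_prop
    simpa [γ, charFun_map_smul] using! (hcont.tendsto 0).comp hr
  have hsmooth (n : ℕ) : ∃ μ : ProbabilityMeasure V,
      charFun (μ : Measure V) = fun t ↦ f t * charFun (γ n) t := by
    have hγ0 : charFun (γ n) 0 = 1 := by
      rw [charFun_map_smul_stdGaussian]
      simp
    exact (hf.mul_charFun (γ n)).exists_charFun_eq_of_integrable (by fun_prop)
      ((hγ_int n).bdd_mul hfc.aestronglyMeasurable (ae_of_all _ hf.norm_apply_le))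
      (by rw [hf0, hγ0, one_mul])
  choose μ hμ using hsmooth
  refine exists_charFun_eq_of_tendsto_charFun (μ := μ) hfc.continuousAt fun t ↦ ?_
  simp_rw [hμ]
  simpa using (hγ_lim t).const_mul (f t)

lemma exists_charFun_eq (hf : IsPositiveDefinite f) (hfc : Continuous f) :
    ∃ μ : Measure V, IsFiniteMeasure μ ∧ charFun μ = f := by
  have h0 := hf.apply_zero_nonneg
  rcases eq_or_ne (f 0) 0 with hf0 | hf0
  · refine ⟨0, inferInstance, funext fun t ↦ ?_⟩
    have hft : ‖f t‖ ≤ 0 := by simpa [hf0] using hf.norm_apply_le t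
    simpa using (norm_le_zero_iff.1 hft).symm
  · obtain ⟨ν, hν⟩ := (hf.const_mul (inv_nonneg.2 h0)).exists_charFun_eq_of_apply_zero_eq_one
      (by fun_prop) (inv_mul_cancel₀ hf0)
    refine ⟨ENNReal.ofReal (f 0).re • (ν : Measure V), Measure.smul_finite _ ENNReal.ofReal_ne_top,
      funext fun t ↦ ?_⟩
    have hf0_re : ((f 0).re : ℂ) = f 0 := (eq_re_of_ofReal_le h0).symm
    rw [charFun_apply, integral_smul_measure, ← charFun_apply, hν,
      ENNReal.toReal_ofReal (nonneg_iff.1 h0).1, real_smul, hf0_re, mul_inv_cancel_left₀ hf0]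

end IsPositiveDefinite

theorem bochner_theorem_general (f : V → ℂ) :
    (Continuous f ∧ IsPositiveDefinite f) ↔
      ∃ μ : Measure V, IsFiniteMeasure μ ∧ ∀ ω, f ω = ∫ x, cexp (-(I * ⟪ω, x⟫)) ∂μ := by
  simp_rw [← charFun_neg_eq_integral]
  constructor
  · rintro ⟨hfc, hf⟩
    obtain ⟨μ, hμ, hμf⟩ := hf.exists_charFun_eq hfc
    refine ⟨μ.map ((-1 : ℝ) • ·), inferInstance, fun ω ↦ ?_⟩
    rw [charFun_map_smul, hμf, neg_one_smul, neg_neg]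
  · rintro ⟨μ, hμ, hμf⟩
    have hf : f = charFun (μ.map ((-1 : ℝ) • ·)) := funext fun ω ↦ by
      rw [hμf, charFun_map_smul, neg_one_smul]
    rw [hf]
    exact ⟨by fun_prop, .charFun _⟩

end Bochner

/-- Bochner's theorem: a function `f : ℝ → ℂ` is continuous and positive
definite iff it is the Fourier transform of a finite positive Borel measure. -/
theorem bochner_theorem (f : ℝ → ℂ) :
    (Continuous f ∧ ∀ (n : ℕ) (x : Fin n → ℝ) (c : Fin n → ℂ),
        0 ≤ (∑ j : Fin n, ∑ k : Fin n, f (x k - x j) * c j * (starRingEnd ℂ) (c k)).re ∧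
        (∑ j : Fin n, ∑ k : Fin n, f (x k - x j) * c j * (starRingEnd ℂ) (c k)).im = 0) ↔
      ∃ μ : Measure ℝ, IsFiniteMeasure μ ∧
        ∀ ω : ℝ, f ω = ∫ x : ℝ, Complex.exp (-(Complex.I * ω * x)) ∂μ := by
  simpa only [IsPositiveDefinite, nonneg_iff, eq_comm (a := (0 : ℝ)), Real.inner_apply, ofReal_mul,
    mul_assoc] using bochner_theorem_general f
end

section
/- Let f : ℝ → ℂ be continuous and bounded. Define U on the closed upper half-plane by U(x+iy) = (1/π) ∫_ℝ f(u) · y/((x−u)² + y²) du for y > 0 and U(x) = f(x) for x ∈ ℝ. Then U is bounded, continuous on the closed upper half-plane, harmonic on the open upper half-plane ℂ₊, and it is the unique function with these properties whose restriction to ℝ equals f. -/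
open MeasureTheory

/-!
After the substitution `u = x + y t` the Poisson integral becomes `π⁻¹ ∫ f(x + y t) / (1 + t²) dt`:
it is an average of `f`, hence bounded, it equals `f` for `y = 0`, and dominated convergence makes
it continuous up to the real axis. It is harmonic because the Poisson kernel is, up to a constant
factor, the difference of the values at `z` and `conj z` of a kernel holomorphic in `z`; taking
`(1 + u z) / ((u - z) (1 + u²))` instead of `1 / (u - z)` makes both integrals converge for
bounded `f`.

For uniqueness, a bounded harmonic function on the half-plane is controlled by its boundary values:
subtracting the harmonic barrier `ε log |z + i|`, which is nonnegative on the real axis and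
tends to infinity, reduces this to the maximum principle on a bounded domain, and then `ε → 0`.
-/

section Laplacian

open InnerProductSpace Laplacian Topology

lemma iteratedDeriv_two_comp_add_smul {𝕜 E F : Type*} [NontriviallyNormedField 𝕜]
    [NormedAddCommGroup E] [NormedSpace 𝕜 E] [NormedAddCommGroup F] [NormedSpace 𝕜 F]
    {f : E → F} {x v : E} {t : 𝕜} (hf : ContDiffAt 𝕜 2 f (x + t • v)) :
    iteratedDeriv 2 (fun s : 𝕜 => f (x + s • v)) t = iteratedFDeriv 𝕜 2 f (x + t • v) ![v, v] := by
  have hline (s : 𝕜) : HasDerivAt (fun s : 𝕜 => x + s • v) v s := by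
    simpa using ((hasDerivAt_id s).smul_const v).const_add x
  have hderiv : deriv (fun s : 𝕜 => f (x + s • v)) =ᶠ[𝓝 t] fun s => fderiv 𝕜 f (x + s • v) v := by
    filter_upwards [(hline t).continuousAt.eventually (hf.eventually (by simp))] with s hs
    exact ((hs.differentiableAt two_ne_zero).hasFDerivAt.comp_hasDerivAt s (hline s)).deriv
  have hfderiv : DifferentiableAt 𝕜 (fderiv 𝕜 f) (x + t • v) :=
    (hf.fderiv_right (m := 1) (by norm_num)).differentiableAt one_ne_zero
  have hfderiv_line : HasDerivAt (fun s : 𝕜 => fderiv 𝕜 f (x + s • v))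
      (fderiv 𝕜 (fderiv 𝕜 f) (x + t • v) v) t :=
    hfderiv.hasFDerivAt.comp_hasDerivAt t (hline t)
  have hderiv₂ : HasDerivAt (fun s : 𝕜 => fderiv 𝕜 f (x + s • v) v)
      (fderiv 𝕜 (fderiv 𝕜 f) (x + t • v) v v) t :=
    (ContinuousLinearMap.apply 𝕜 F v).hasFDerivAt.comp_hasDerivAt t hfderiv_line
  rw [iteratedDeriv_succ, iteratedDeriv_one, hderiv.deriv_eq, hderiv₂.deriv,
    iteratedFDeriv_two_apply]
  rfl

lemma iteratedDeriv_two_nonpos_of_isLocalMax {g : ℝ → ℝ} {a : ℝ} (hg : ContinuousAt g a)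
    (hmax : IsLocalMax g a) : iteratedDeriv 2 g a ≤ 0 := by
  by_contra! hpos
  rw [iteratedDeriv_succ, iteratedDeriv_one] at hpos
  have hmin : IsLocalMin g a := isLocalMin_of_deriv_deriv_pos hpos hmax.deriv_eq_zero hg
  have hconst : g =ᶠ[𝓝 a] fun _ => g a := by
    filter_upwards [hmax, hmin] with x hle hge using le_antisymm hle hge
  simp [hconst.deriv.deriv_eq] at hpos

variable {E : Type*} [NormedAddCommGroup E] [InnerProductSpace ℝ E] [FiniteDimensional ℝ E]
  {F : Type*} [NormedAddCommGroup F] [NormedSpace ℝ F]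

lemma laplacian_eq_sum_iteratedDeriv {ι : Type*} [Fintype ι] (v : OrthonormalBasis ι ℝ E)
    {f : E → F} {x : E} (hf : ContDiffAt ℝ 2 f x) :
    Δ f x = ∑ i, iteratedDeriv 2 (fun t : ℝ => f (x + t • v i)) 0 := by
  have hf' (i : ι) : ContDiffAt ℝ 2 f (x + (0 : ℝ) • v i) := by simpa using hf
  simp [laplacian_eq_iteratedFDeriv_orthonormalBasis f v,
    fun i => iteratedDeriv_two_comp_add_smul (hf' i)]

lemma laplacian_nonpos_of_isLocalMax {f : E → ℝ} {x : E} (hf : ContDiffAt ℝ 2 f x)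
    (hmax : IsLocalMax f x) : Δ f x ≤ 0 := by
  rw [laplacian_eq_sum_iteratedDeriv (stdOrthonormalBasis ℝ E) hf]
  refine Finset.sum_nonpos fun i _ => ?_
  have hline : ContinuousAt (fun t : ℝ => x + t • stdOrthonormalBasis ℝ E i) 0 := by fun_prop
  refine iteratedDeriv_two_nonpos_of_isLocalMax
    (ContinuousAt.comp (by simpa using hf.continuousAt) hline) ?_
  have hle : ∀ᶠ y in 𝓝 x, f y ≤ f x := hmax
  filter_upwards [hline.eventually (by simpa using hle)] with t ht
  simpa using ht

lemma laplacian_norm_sq (x : E) :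
    Δ (fun y : E => ‖y‖ ^ 2) x = 2 * Module.finrank ℝ E := by
  rw [laplacian_eq_sum_iteratedDeriv (stdOrthonormalBasis ℝ E) (contDiff_norm_sq ℝ).contDiffAt]
  have hquad (i) : (fun t : ℝ => ‖x + t • stdOrthonormalBasis ℝ E i‖ ^ 2) =
      fun t => ‖x‖ ^ 2 + (2 * inner ℝ x (stdOrthonormalBasis ℝ E i)) * t + t ^ 2 := by
    ext t
    rw [norm_add_sq_real, norm_smul, inner_smul_right]
    simp [mul_comm, mul_left_comm]
  have hsecond (a b : ℝ) : iteratedDeriv 2 (fun t : ℝ => a + b * t + t ^ 2) 0 = 2 := by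
    have hderiv (t : ℝ) : HasDerivAt (fun t : ℝ => a + b * t + t ^ 2) (b + 2 * t) t := by
      simpa using (((hasDerivAt_id t).const_mul b).const_add a).fun_add (hasDerivAt_pow 2 t)
    rw [iteratedDeriv_succ, iteratedDeriv_one, funext fun t => (hderiv t).deriv]
    simp
  simp only [hquad, hsecond]
  simp [mul_comm]

lemma harmonicAt_comp_linearIsometryEquiv {E' : Type*} [NormedAddCommGroup E']
    [InnerProductSpace ℝ E'] [FiniteDimensional ℝ E'] {f : E → F} {x : E'} (e : E' ≃ₗᵢ[ℝ] E)
    (hf : HarmonicAt f (e x)) : HarmonicAt (f ∘ e) x := by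
  have hlaplacian {y : E'} (hy : ContDiffAt ℝ 2 f (e y)) : Δ (f ∘ e) y = Δ f (e y) := by
    rw [laplacian_eq_sum_iteratedDeriv (stdOrthonormalBasis ℝ E')
        (hy.comp y e.contDiff.contDiffAt),
      laplacian_eq_sum_iteratedDeriv ((stdOrthonormalBasis ℝ E').map e) hy]
    simp
  refine ⟨hf.1.comp x e.contDiff.contDiffAt, ?_⟩
  filter_upwards [e.continuous.continuousAt.eventually hf.eventually] with y hy
  exact (hlaplacian hy.1).trans hy.2.self_of_nhds

lemma harmonicOnNhd_iff_of_isOpen {f : E → F} {s : Set E} (hs : IsOpen s) :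
    HarmonicOnNhd f s ↔ ContDiffOn ℝ 2 f s ∧ ∀ x ∈ s, Δ f x = 0 := by
  refine ⟨fun h => ⟨h.contDiffOn, fun x hx => (h x hx).2.self_of_nhds⟩, fun h x hx => ?_⟩
  exact ⟨h.1.contDiffAt (hs.mem_nhds hx), Filter.eventually_of_mem (hs.mem_nhds hx) h.2⟩

lemma harmonicContOnCl_congr {f g : E → F} {s : Set E} (hs : IsOpen s)
    (hf : HarmonicContOnCl f s) (hfg : Set.EqOn g f (closure s)) : HarmonicContOnCl g s where
  harmonicOnNhd x hx := (harmonicAt_congr_nhds <| Filter.eventually_of_mem (hs.mem_nhds hx)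
    fun _ hy => hfg (subset_closure hy)).2 (hf.harmonicOnNhd x hx)
  continuousOn := hf.continuousOn.congr hfg

end Laplacian

section MaximumPrinciple

open InnerProductSpace Laplacian Topology Filter Metric Set

lemma le_of_forall_pos_le_add_mul {a b d : ℝ} (h : ∀ ε > 0, a ≤ b + ε * d) : a ≤ b := by
  have hlim : Tendsto (fun ε : ℝ => b + ε * d) (𝓝[>] 0) (𝓝 b) :=
    (Continuous.tendsto' (by fun_prop) 0 b (by simp)).mono_left nhdsWithin_le_nhds
  exact ge_of_tendsto hlim (eventually_mem_nhdsWithin.mono h)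

variable {E : Type*} [NormedAddCommGroup E] [InnerProductSpace ℝ E] [FiniteDimensional ℝ E]
  [Nontrivial E] {u h : E → ℝ} {s : Set E} {c : ℝ}

lemma not_isLocalMax_add_smul_norm_sq_of_harmonicAt {x : E} (hu : HarmonicAt u x) {δ : ℝ}
    (hδ : 0 < δ) : ¬ IsLocalMax (u + δ • fun y : E => ‖y‖ ^ 2) x := by
  intro hmax
  have hsq : ContDiffAt ℝ 2 (δ • fun y : E => ‖y‖ ^ 2) x :=
    (contDiff_norm_sq ℝ).contDiffAt.const_smul δ
  have hlaplacian : Δ (u + δ • fun y : E => ‖y‖ ^ 2) x = δ * (2 * Module.finrank ℝ E) := by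
    rw [hu.1.laplacian_add hsq, hu.2.self_of_nhds,
      laplacian_smul δ (contDiff_norm_sq ℝ).contDiffAt, laplacian_norm_sq]
    simp
  have hpos : 0 < δ * (2 * Module.finrank ℝ E) := by
    have := Module.finrank_pos (R := ℝ) (M := E)
    positivity
  exact (hlaplacian ▸ hpos).not_ge
    (laplacian_nonpos_of_isLocalMax (hu.1.add hsq) hmax)

lemma harmonicContOnCl_le_of_isBounded (hs : Bornology.IsBounded s) (hu : HarmonicContOnCl u s)
    (hfrontier : ∀ x ∈ frontier s, u x ≤ c) : ∀ x ∈ closure s, u x ≤ c := by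
  intro x hx
  obtain ⟨R, hR⟩ := hs.closure.exists_norm_le
  have hperturbed (δ : ℝ) (hδ : 0 < δ) : u x ≤ c + δ * R ^ 2 := by
    obtain ⟨x₀, hx₀, hmax⟩ := hs.isCompact_closure.exists_isMaxOn ⟨x, hx⟩
      (hu.continuousOn.add (by fun_prop : Continuous fun y : E => δ • ‖y‖ ^ 2).continuousOn)
    have hx₀_frontier : x₀ ∈ frontier s := by
      refine ⟨hx₀, fun hint => not_isLocalMax_add_smul_norm_sq_of_harmonicAt
        (hu.harmonicOnNhd x₀ (interior_subset hint)) hδ ?_⟩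
      exact hmax.isLocalMax (mem_of_superset (mem_interior_iff_mem_nhds.1 hint) subset_closure)
    calc u x ≤ u x + δ * ‖x‖ ^ 2 := le_add_of_nonneg_right (by positivity)
      _ ≤ u x₀ + δ * ‖x₀‖ ^ 2 := hmax hx
      _ ≤ c + δ * R ^ 2 := by gcongr; exacts [hfrontier x₀ hx₀_frontier, hR x₀ hx₀]
  exact le_of_forall_pos_le_add_mul hperturbed

lemma harmonicContOnCl_le_of_eventually_cocompact_le (hu : HarmonicContOnCl u s)
    (hfrontier : ∀ x ∈ frontier s, u x ≤ c)
    (hinfty : ∀ᶠ x in cocompact E ⊓ 𝓟 (closure s), u x ≤ c) : ∀ x ∈ closure s, u x ≤ c := by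
  obtain ⟨K, hK, hKu⟩ := mem_cocompact.1 (eventually_inf_principal.1 hinfty)
  obtain ⟨R, hR⟩ := hK.isBounded.subset_ball 0
  have houtside : ∀ x ∈ closure s, x ∉ ball 0 R → u x ≤ c :=
    fun x hx hxR => hKu (fun hxK => hxR (hR hxK)) hx
  intro x hx
  by_cases hxR : x ∈ ball 0 R
  · have hx_cut : x ∈ closure (s ∩ ball 0 R) := isOpen_ball.closure_inter ⟨hx, hxR⟩
    refine harmonicContOnCl_le_of_isBounded (isBounded_ball.subset inter_subset_right)
      (hu.mono inter_subset_left) (fun y hy => ?_) x hx_cut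
    rcases frontier_inter_subset s (ball 0 R) hy with ⟨hys, -⟩ | ⟨hys, hyR⟩
    · exact hfrontier y hys
    · exact houtside y hys fun hy_ball => hyR.2 (by rwa [isOpen_ball.interior_eq])
  · exact houtside x hx hxR

lemma harmonicContOnCl_le_of_barrier {K : ℝ} (hu : HarmonicContOnCl u s)
    (hK : ∀ x ∈ closure s, u x ≤ K) (hh : HarmonicContOnCl h s) (hh₀ : ∀ x ∈ frontier s, 0 ≤ h x)
    (hh_infty : Tendsto h (cocompact E ⊓ 𝓟 (closure s)) atTop)
    (hfrontier : ∀ x ∈ frontier s, u x ≤ c) : ∀ x ∈ closure s, u x ≤ c := by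
  intro x hx
  have hperturbed (ε : ℝ) (hε : 0 < ε) : u x ≤ c + ε * h x := by
    have hle := harmonicContOnCl_le_of_eventually_cocompact_le (c := c) (hu.sub (hh.const_smul ε))
      (fun y hy => ?_) ?_ x hx
    · simpa [sub_le_iff_le_add] using hle
    · exact (sub_le_self _ (mul_nonneg hε.le (hh₀ y hy))).trans (hfrontier y hy)
    · filter_upwards [hh_infty.eventually_ge_atTop ((K - c) / ε),
        mem_inf_of_right (mem_principal_self _)] with y hy_large hy
      have hKc : K - c ≤ ε * h y := (div_le_iff₀' hε).1 hy_large
      have huK : u y ≤ K := hK y hy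
      simp only [Pi.sub_apply, Pi.smul_apply, smul_eq_mul]
      linarith
  exact le_of_forall_pos_le_add_mul hperturbed

end MaximumPrinciple

section UpperHalfPlane

open InnerProductSpace Topology Filter Set

lemma one_le_norm_add_I {z : ℂ} (hz : 0 ≤ z.im) : 1 ≤ ‖z + Complex.I‖ :=
  calc (1 : ℝ) ≤ (z + Complex.I).im := by simpa using hz
    _ ≤ ‖z + Complex.I‖ := Complex.im_le_norm _

lemma harmonicContOnCl_log_norm_add_I :
    HarmonicContOnCl (fun z : ℂ => Real.log ‖z + Complex.I‖) {z | 0 < z.im} := by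
  refine HarmonicOnNhd.harmonicContOnCl fun z hz => ?_
  rw [Complex.closure_setOfPred_lt_im] at hz
  exact AnalyticAt.harmonicAt_log_norm (analyticAt_id.add analyticAt_const)
    (norm_pos_iff.1 (one_pos.trans_le (one_le_norm_add_I hz)))

lemma tendsto_log_norm_add_I_cocompact :
    Tendsto (fun z : ℂ => Real.log ‖z + Complex.I‖) (cocompact ℂ) atTop :=
  Real.tendsto_log_atTop.comp <| tendsto_norm_cocompact_atTop.comp
    (Homeomorph.addRight Complex.I).isClosedEmbedding.tendsto_cocompact

lemma norm_le_of_harmonicContOnCl_upperHalfPlane {F : Type*} [NormedAddCommGroup F]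
    [NormedSpace ℝ F] {u : ℂ → F} {K C : ℝ} (hu : HarmonicContOnCl u {z | 0 < z.im})
    (hbdd : ∀ z : ℂ, 0 ≤ z.im → ‖u z‖ ≤ K) (hreal : ∀ x : ℝ, ‖u x‖ ≤ C) {z : ℂ}
    (hz : 0 ≤ z.im) : ‖u z‖ ≤ C := by
  obtain ⟨g, hg, hgz⟩ := exists_dual_vector'' ℝ (u z)
  have hgu (w : ℂ) : g (u w) ≤ ‖u w‖ :=
    (le_abs_self _).trans <| (g.le_of_opNorm_le hg _).trans_eq (one_mul _)
  have hle : ∀ w ∈ closure {z : ℂ | 0 < z.im}, g (u w) ≤ C := by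
    refine harmonicContOnCl_le_of_barrier (K := K)
      ⟨hu.harmonicOnNhd.comp_CLM g, g.continuous.comp_continuousOn hu.continuousOn⟩ ?_
      harmonicContOnCl_log_norm_add_I ?_
      (tendsto_log_norm_add_I_cocompact.mono_left inf_le_left) ?_
    · rw [Complex.closure_setOfPred_lt_im]
      exact fun w hw => (hgu w).trans (hbdd w hw)
    · rw [Complex.frontier_setOfPred_lt_im]
      exact fun w hw => Real.log_nonneg (one_le_norm_add_I hw.ge)
    · rw [Complex.frontier_setOfPred_lt_im]
      intro w hw
      lift w to ℝ using hw
      exact (hgu _).trans (hreal _)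
  rw [Complex.closure_setOfPred_lt_im] at hle
  simpa [hgz] using hle z hz

end UpperHalfPlane

section CauchyTransform

open Topology Filter

variable {E : Type*} [NormedAddCommGroup E] [NormedSpace ℂ E] {μ : Measure ℝ} {g : ℝ → E} {z : ℂ}

/-- The Cauchy transform `∫ g(u) / (u - z) dμ(u)` of a density `g` with respect to a measure `μ` on
the real line. It is holomorphic off the real line. -/
noncomputable def cauchyTransform (μ : Measure ℝ) (g : ℝ → E) (z : ℂ) : E :=
  ∫ u, ((u : ℂ) - z)⁻¹ • g u ∂μ

/-- The Nevanlinna transform `∫ (1 + u z) / (u - z) g(u) dμ(u)`. Its kernel is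
`(1 + u²) / (u - z) - u`, so its increments in `z` are those of the Cauchy transform of the density
`(1 + u²) g(u)`, which need not be integrable. -/
noncomputable def nevanlinnaTransform (μ : Measure ℝ) (g : ℝ → E) (z : ℂ) : E :=
  ∫ u, ((1 + u * z) / (u - z)) • g u ∂μ

lemma ofReal_sub_ne_zero (hz : z.im ≠ 0) (u : ℝ) : (u : ℂ) - z ≠ 0 := fun h => by
  simpa [hz] using congrArg Complex.im h

lemma norm_inv_ofReal_sub_le {r : ℝ} (hr : 0 < r) (hz : r ≤ |z.im|) (u : ℝ) :
    ‖((u : ℂ) - z)⁻¹‖ ≤ r⁻¹ := by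
  rw [norm_inv]
  refine inv_anti₀ hr (hz.trans ?_)
  simpa using Complex.abs_im_le_norm ((u : ℂ) - z)

lemma integrable_inv_ofReal_sub_smul (hg : Integrable g μ) (hz : z.im ≠ 0) :
    Integrable (fun u : ℝ => ((u : ℂ) - z)⁻¹ • g u) μ :=
  hg.bdd_smul |z.im|⁻¹ (by fun_prop)
    (.of_forall (norm_inv_ofReal_sub_le (abs_pos.2 hz) le_rfl))

lemma differentiableAt_cauchyTransform (hg : Integrable g μ) (hz : z.im ≠ 0) :
    DifferentiableAt ℂ (cauchyTransform μ g) z := by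
  set r : ℝ := |z.im| / 2
  have hr : 0 < r := by positivity
  have hnhds : {w : ℂ | r < |w.im|} ∈ 𝓝 z :=
    (isOpen_lt continuous_const (by fun_prop)).mem_nhds (half_lt_self (abs_pos.2 hz))
  have him {w : ℂ} (hw : w ∈ {w : ℂ | r < |w.im|}) : w.im ≠ 0 := abs_pos.1 (hr.trans hw)
  refine (hasDerivAt_integral_of_dominated_loc_of_deriv_le (bound := fun u => (r⁻¹) ^ 2 * ‖g u‖)
    (F' := fun w u => (((u : ℂ) - w)⁻¹ ^ 2) • g u) hnhds ?_
    (integrable_inv_ofReal_sub_smul hg hz) ?_ ?_ (hg.norm.const_mul _) ?_).2.differentiableAt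
  · filter_upwards [hnhds] with w hw
    exact (integrable_inv_ofReal_sub_smul hg (him hw)).aestronglyMeasurable
  · exact AEStronglyMeasurable.smul (by fun_prop) hg.aestronglyMeasurable
  · refine .of_forall fun u w hw => ?_
    rw [norm_smul, norm_pow]
    gcongr
    exact norm_inv_ofReal_sub_le hr hw.le u
  · refine .of_forall fun u w hw => HasDerivAt.smul_const ?_ (g u)
    simpa [div_eq_mul_inv] using
      ((hasDerivAt_id w).const_sub (u : ℂ)).fun_inv (ofReal_sub_ne_zero (him hw) u)

lemma analyticAt_cauchyTransform [CompleteSpace E] (hg : Integrable g μ) (hz : z.im ≠ 0) :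
    AnalyticAt ℂ (cauchyTransform μ g) z := by
  have hopen : IsOpen {w : ℂ | w.im ≠ 0} := isOpen_ne_fun Complex.continuous_im continuous_const
  exact DifferentiableOn.analyticAt (fun w hw =>
    (differentiableAt_cauchyTransform hg hw).differentiableWithinAt) (hopen.mem_nhds hz)

lemma nevanlinnaKernel_smul_eq {V : Type*} [AddCommGroup V] [Module ℂ V] (hz : z.im ≠ 0) (u : ℝ)
    (v : V) : ((1 + u * z) / (u - z)) • v = z • v + (1 + z ^ 2) • ((u : ℂ) - z)⁻¹ • v := by
  rw [smul_smul, ← add_smul]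
  congr 1
  have := ofReal_sub_ne_zero hz u
  field_simp
  ring

lemma integrable_nevanlinnaKernel_smul (hg : Integrable g μ) (hz : z.im ≠ 0) :
    Integrable (fun u : ℝ => ((1 + u * z) / (u - z)) • g u) μ := by
  simp only [nevanlinnaKernel_smul_eq hz]
  exact (hg.smul z).add ((integrable_inv_ofReal_sub_smul hg hz).smul _)

lemma nevanlinnaTransform_eq_cauchyTransform (hg : Integrable g μ) (hz : z.im ≠ 0) :
    nevanlinnaTransform μ g z = z • ∫ u, g u ∂μ + (1 + z ^ 2) • cauchyTransform μ g z := by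
  have hcauchy := (integrable_inv_ofReal_sub_smul hg hz).smul (1 + z ^ 2)
  simp only [nevanlinnaTransform, cauchyTransform, nevanlinnaKernel_smul_eq hz, ← integral_smul]
  exact integral_add (hg.smul z) hcauchy

lemma analyticAt_nevanlinnaTransform [CompleteSpace E] (hg : Integrable g μ) (hz : z.im ≠ 0) :
    AnalyticAt ℂ (nevanlinnaTransform μ g) z := by
  have heq : nevanlinnaTransform μ g =ᶠ[𝓝 z]
      fun w => w • ∫ u, g u ∂μ + (1 + w ^ 2) • cauchyTransform μ g w := by
    filter_upwards [Complex.continuous_im.continuousAt.eventually_ne hz] with w hw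
    exact nevanlinnaTransform_eq_cauchyTransform hg hw
  rw [analyticAt_congr heq]
  have hcauchy := analyticAt_cauchyTransform hg hz
  fun_prop

end CauchyTransform

section PoissonIntegral

open InnerProductSpace ComplexConjugate

variable {E : Type*} [NormedAddCommGroup E]

section Real

variable [NormedSpace ℝ E] {f : ℝ → E} {M : ℝ}

/-- The Poisson integral of `f`, in the form `π⁻¹ ∫ f(x + y t) / (1 + t²) dt` obtained from the
Poisson kernel by the substitution `u = x + y t`. Unlike the kernel, this form makes sense on the
real axis, where it returns `f`. -/
noncomputable def poissonIntegral (f : ℝ → E) (z : ℂ) : E :=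
  Real.pi⁻¹ • ∫ t : ℝ, (1 + t ^ 2)⁻¹ • f (z.re + z.im * t)

lemma poissonIntegral_ofReal [CompleteSpace E] (f : ℝ → E) (x : ℝ) :
    poissonIntegral f x = f x := by
  simp [poissonIntegral, integral_smul_const, integral_univ_inv_one_add_sq, smul_smul,
    Real.pi_ne_zero]

lemma norm_inv_one_add_sq_smul_le {e : E} (he : ‖e‖ ≤ M) (t : ℝ) :
    ‖(1 + t ^ 2)⁻¹ • e‖ ≤ (1 + t ^ 2)⁻¹ * M := by
  rw [norm_smul, Real.norm_of_nonneg (by positivity)]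
  gcongr

lemma norm_poissonIntegral_le (hf : ∀ x, ‖f x‖ ≤ M) (z : ℂ) : ‖poissonIntegral f z‖ ≤ M := by
  have hintegral : ‖∫ t : ℝ, (1 + t ^ 2)⁻¹ • f (z.re + z.im * t)‖ ≤ Real.pi * M := by
    rw [← integral_univ_inv_one_add_sq, ← integral_mul_const]
    exact norm_integral_le_of_norm_le (integrable_inv_one_add_sq.mul_const M)
      (.of_forall fun t => norm_inv_one_add_sq_smul_le (hf _) t)
  rw [poissonIntegral, norm_smul, Real.norm_of_nonneg (by positivity)]
  exact (inv_mul_le_iff₀ Real.pi_pos).2 hintegral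

lemma continuous_poissonIntegral (hf : Continuous f) (hfM : ∀ x, ‖f x‖ ≤ M) :
    Continuous (poissonIntegral f) := by
  refine (continuous_of_dominated (fun z => ?_)
    (fun z => .of_forall fun t => norm_inv_one_add_sq_smul_le (hfM _) t)
    (integrable_inv_one_add_sq.mul_const M) (.of_forall fun t => ?_)).const_smul _
  · exact Continuous.aestronglyMeasurable (by fun_prop (disch := intros; positivity))
  · fun_prop

lemma poissonIntegral_eq_integral_poissonKernel (f : ℝ → E) {z : ℂ} (hz : 0 < z.im) :
    poissonIntegral f z =
      Real.pi⁻¹ • ∫ u : ℝ, (z.im / ((z.re - u) ^ 2 + z.im ^ 2)) • f u := by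
  let G : ℝ → E := fun u => (1 + ((u - z.re) / z.im) ^ 2)⁻¹ • f u
  have hkernel (u : ℝ) : z.im⁻¹ • G u = (z.im / ((z.re - u) ^ 2 + z.im ^ 2)) • f u := by
    rw [smul_smul]
    congr 1
    have : (z.re - u) ^ 2 + z.im ^ 2 ≠ 0 := by positivity
    field_simp
    ring
  unfold poissonIntegral
  congr 1
  calc ∫ t : ℝ, (1 + t ^ 2)⁻¹ • f (z.re + z.im * t) = ∫ t : ℝ, G (z.re + z.im * t) := by
        simp [G, hz.ne']
    _ = z.im⁻¹ • ∫ u, G (z.re + u) := by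
        rw [Measure.integral_comp_mul_left (fun s => G (z.re + s)), abs_of_pos (inv_pos.2 hz)]
    _ = ∫ u, z.im⁻¹ • G u := by rw [integral_add_left_eq_self G, integral_smul]
    _ = ∫ u, (z.im / ((z.re - u) ^ 2 + z.im ^ 2)) • f u := by simp only [hkernel]

end Real

variable [NormedSpace ℂ E] {f : ℝ → E} {M : ℝ}

lemma poissonKernel_eq_nevanlinnaKernel_sub {z : ℂ} (hz : z.im ≠ 0) (u : ℝ) :
    ((z.im / ((z.re - u) ^ 2 + z.im ^ 2) : ℝ) : ℂ) = (2 * Complex.I)⁻¹ *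
      ((1 + u * z) / (u - z) - (1 + u * conj z) / (u - conj z)) * ((1 + u ^ 2)⁻¹ : ℝ) := by
  have him : (z.im : ℂ) = (z - conj z) / (2 * Complex.I) := Complex.im_eq_sub_conj z
  have hden : ((z.re - u : ℂ) ^ 2 + z.im ^ 2) = (u - z) * (u - conj z) := by
    rw [Complex.re_eq_add_conj, Complex.im_eq_sub_conj, div_pow _ (2 * Complex.I), mul_pow,
      Complex.I_sq]
    ring
  have hsub := ofReal_sub_ne_zero hz u
  have hsub_conj : (u : ℂ) - conj z ≠ 0 := ofReal_sub_ne_zero (by simpa using hz) u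
  have hone : (1 + (u : ℂ) ^ 2) ≠ 0 := mod_cast (by positivity : (1 + u ^ 2 : ℝ) ≠ 0)
  push_cast
  rw [hden, him]
  field_simp
  ring

lemma poissonKernel_smul_eq_nevanlinnaKernel_sub {z : ℂ} (hz : z.im ≠ 0) (u : ℝ) (e : E) :
    (z.im / ((z.re - u) ^ 2 + z.im ^ 2)) • e = (2 * Complex.I)⁻¹ •
      (((1 + u * z) / (u - z)) • (1 + u ^ 2)⁻¹ • e -
        ((1 + u * conj z) / (u - conj z)) • (1 + u ^ 2)⁻¹ • e) := by
  rw [← sub_smul, ← Complex.coe_smul (1 + u ^ 2)⁻¹, smul_smul, smul_smul,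
    ← poissonKernel_eq_nevanlinnaKernel_sub hz, Complex.coe_smul]

lemma poissonIntegral_eq_nevanlinnaTransform_sub
    (hf : Integrable fun u : ℝ => (1 + u ^ 2)⁻¹ • f u) {z : ℂ} (hz : 0 < z.im) :
    poissonIntegral f z = (2 * Real.pi * Complex.I)⁻¹ •
      (nevanlinnaTransform volume (fun u => (1 + u ^ 2)⁻¹ • f u) z -
        nevanlinnaTransform volume (fun u => (1 + u ^ 2)⁻¹ • f u) (conj z)) := by
  have hz_conj : (conj z).im ≠ 0 := by simpa using hz.ne'
  unfold nevanlinnaTransform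
  rw [poissonIntegral_eq_integral_poissonKernel f hz,
    ← integral_sub (integrable_nevanlinnaKernel_smul hf hz.ne')
      (integrable_nevanlinnaKernel_smul hf hz_conj)]
  simp only [poissonKernel_smul_eq_nevanlinnaKernel_sub hz.ne', integral_smul]
  rw [← Complex.coe_smul, smul_smul]
  congr 1
  push_cast
  ring

lemma harmonicAt_poissonIntegral [CompleteSpace E]
    (hf : Integrable fun u : ℝ => (1 + u ^ 2)⁻¹ • f u) {z : ℂ} (hz : 0 < z.im) :
    HarmonicAt (poissonIntegral f) z := by
  let N : ℂ → E := (2 * Real.pi * Complex.I)⁻¹ •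
    nevanlinnaTransform volume (fun u => (1 + u ^ 2)⁻¹ • f u)
  have hN {w : ℂ} (hw : w.im ≠ 0) : HarmonicAt N w :=
    (analyticAt_nevanlinnaTransform hf hw).const_smul.harmonicAt
  have hN_conj : HarmonicAt (N ∘ Complex.conjLIE) z :=
    harmonicAt_comp_linearIsometryEquiv Complex.conjLIE (hN (by simpa using hz.ne'))
  refine (harmonicAt_congr_nhds ?_).2 ((hN hz.ne').sub hN_conj)
  filter_upwards [(isOpen_lt continuous_const Complex.continuous_im).mem_nhds hz] with w hw
  simp [N, poissonIntegral_eq_nevanlinnaTransform_sub hf hw, smul_sub]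

lemma harmonicContOnCl_poissonIntegral [CompleteSpace E] (hf : Continuous f)
    (hfM : ∀ x, ‖f x‖ ≤ M) : HarmonicContOnCl (poissonIntegral f) {z | 0 < z.im} := by
  have hint : Integrable fun u : ℝ => (1 + u ^ 2)⁻¹ • f u :=
    (integrable_inv_one_add_sq.mul_const M).mono'
      (Continuous.aestronglyMeasurable (by fun_prop (disch := intros; positivity)))
      (.of_forall fun u => norm_inv_one_add_sq_smul_le (hfM u) u)
  exact ⟨fun z hz => harmonicAt_poissonIntegral hint hz,
    (continuous_poissonIntegral hf hfM).continuousOn⟩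

end PoissonIntegral

section Coordinates

open InnerProductSpace Laplacian

variable {F : Type*} [NormedAddCommGroup F] [NormedSpace ℝ F]

lemma laplacian_eq_iteratedDeriv_re_add_im {u : ℂ → F} {z : ℂ} (hu : ContDiffAt ℝ 2 u z) :
    Δ u z = iteratedDeriv 2 (fun s : ℝ => u ⟨s, z.im⟩) z.re +
      iteratedDeriv 2 (fun t : ℝ => u ⟨z.re, t⟩) z.im := by
  have hre_line (s : ℝ) : (⟨0, z.im⟩ : ℂ) + s • (1 : ℂ) = ⟨s, z.im⟩ := by
    apply Complex.ext <;> simp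
  have him_line (t : ℝ) : (⟨z.re, 0⟩ : ℂ) + t • Complex.I = ⟨z.re, t⟩ := by
    apply Complex.ext <;> simp
  have hre := iteratedDeriv_two_comp_add_smul (f := u) (x := ⟨0, z.im⟩) (v := (1 : ℂ))
    (t := z.re) (by rwa [hre_line])
  have him := iteratedDeriv_two_comp_add_smul (f := u) (x := ⟨z.re, 0⟩) (v := Complex.I)
    (t := z.im) (by rwa [him_line])
  simp only [hre_line, him_line] at hre him
  rw [laplacian_eq_iteratedFDeriv_complexPlane, hre, him]

lemma harmonicContOnCl_upperHalfPlane_iff {W : ℝ → ℝ → F} :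
    HarmonicContOnCl (fun z : ℂ => W z.re z.im) {z | 0 < z.im} ↔
      ContinuousOn (fun p : ℝ × ℝ => W p.1 p.2) {p | 0 ≤ p.2} ∧
      ContDiffOn ℝ 2 (fun p : ℝ × ℝ => W p.1 p.2) {p | 0 < p.2} ∧
      ∀ x y : ℝ, 0 < y →
        iteratedDeriv 2 (fun s => W s y) x + iteratedDeriv 2 (fun t => W x t) y = 0 := by
  have hopen : IsOpen {z : ℂ | 0 < z.im} := isOpen_lt continuous_const Complex.continuous_im
  have hcont : ContinuousOn (fun z : ℂ => W z.re z.im) {z | 0 ≤ z.im} ↔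
      ContinuousOn (fun p : ℝ × ℝ => W p.1 p.2) {p | 0 ≤ p.2} :=
    ⟨fun h => h.comp Complex.equivRealProdCLM.symm.continuous.continuousOn fun _ hp => hp,
      fun h => h.comp Complex.equivRealProdCLM.continuous.continuousOn fun _ hz => hz⟩
  have hsmooth : ContDiffOn ℝ 2 (fun z : ℂ => W z.re z.im) {z | 0 < z.im} ↔
      ContDiffOn ℝ 2 (fun p : ℝ × ℝ => W p.1 p.2) {p | 0 < p.2} :=
    Complex.equivRealProdCLM.contDiffOn_comp_iff (f := fun p : ℝ × ℝ => W p.1 p.2)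
      (s := {p | 0 < p.2})
  have hlaplacian (h : ContDiffOn ℝ 2 (fun z : ℂ => W z.re z.im) {z | 0 < z.im}) :
      (∀ z ∈ {z : ℂ | 0 < z.im}, Δ (fun z : ℂ => W z.re z.im) z = 0) ↔
        ∀ x y : ℝ, 0 < y →
          iteratedDeriv 2 (fun s => W s y) x + iteratedDeriv 2 (fun t => W x t) y = 0 := by
    refine ⟨fun hΔ x y hy => ?_, fun hΔ z hz => ?_⟩
    · have hdiff := h.contDiffAt (hopen.mem_nhds (x := ⟨x, y⟩) hy)
      rw [← hΔ ⟨x, y⟩ hy, laplacian_eq_iteratedDeriv_re_add_im hdiff]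
    · have hdiff := h.contDiffAt (hopen.mem_nhds hz)
      rw [← hΔ z.re z.im hz, laplacian_eq_iteratedDeriv_re_add_im hdiff]
  rw [← hcont, ← hsmooth, ← Complex.closure_setOfPred_lt_im]
  constructor
  · rintro ⟨hharmonic, hclosure⟩
    obtain ⟨hdiff, hΔ⟩ := (harmonicOnNhd_iff_of_isOpen hopen).1 hharmonic
    exact ⟨hclosure, hdiff, (hlaplacian hdiff).1 hΔ⟩
  · rintro ⟨hclosure, hdiff, hΔ⟩
    exact ⟨(harmonicOnNhd_iff_of_isOpen hopen).2 ⟨hdiff, (hlaplacian hdiff).2 hΔ⟩, hclosure⟩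

end Coordinates

theorem dirichlet_problem_upper_half_plane_general {E : Type*} [NormedAddCommGroup E]
    [NormedSpace ℂ E] [CompleteSpace E]
    (f : ℝ → E) (hf_cont : Continuous f) (M : ℝ) (hf_bdd : ∀ x : ℝ, ‖f x‖ ≤ M)
    (U : ℝ → ℝ → E)
    (hU0 : ∀ x : ℝ, U x 0 = f x)
    (hUpos : ∀ x y : ℝ, 0 < y →
      U x y = Real.pi⁻¹ • ∫ u : ℝ, (y / ((x - u) ^ 2 + y ^ 2)) • f u) :
    ((∃ K : ℝ, ∀ x y : ℝ, 0 ≤ y → ‖U x y‖ ≤ K) ∧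
      ContinuousOn (fun p : ℝ × ℝ => U p.1 p.2) {p : ℝ × ℝ | 0 ≤ p.2} ∧
      ContDiffOn ℝ 2 (fun p : ℝ × ℝ => U p.1 p.2) {p : ℝ × ℝ | 0 < p.2} ∧
      (∀ x y : ℝ, 0 < y →
        iteratedDeriv 2 (fun s : ℝ => U s y) x + iteratedDeriv 2 (fun t : ℝ => U x t) y = 0)) ∧
    ∀ V : ℝ → ℝ → E,
      (∃ K : ℝ, ∀ x y : ℝ, 0 ≤ y → ‖V x y‖ ≤ K) →
      ContinuousOn (fun p : ℝ × ℝ => V p.1 p.2) {p : ℝ × ℝ | 0 ≤ p.2} →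
      ContDiffOn ℝ 2 (fun p : ℝ × ℝ => V p.1 p.2) {p : ℝ × ℝ | 0 < p.2} →
      (∀ x y : ℝ, 0 < y →
        iteratedDeriv 2 (fun s : ℝ => V s y) x + iteratedDeriv 2 (fun t : ℝ => V x t) y = 0) →
      (∀ x : ℝ, V x 0 = f x) →
      ∀ x y : ℝ, 0 ≤ y → V x y = U x y := by
  have hU {z : ℂ} (hz : 0 ≤ z.im) : U z.re z.im = poissonIntegral f z := by
    rcases hz.eq_or_lt with hreal | hpos
    · lift z to ℝ using hreal.symm
      simp [hU0, poissonIntegral_ofReal]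
    · rw [hUpos _ _ hpos, poissonIntegral_eq_integral_poissonKernel f hpos]
  have hUharm : InnerProductSpace.HarmonicContOnCl (fun z : ℂ => U z.re z.im) {z | 0 < z.im} :=
    harmonicContOnCl_congr (isOpen_lt continuous_const Complex.continuous_im)
      (harmonicContOnCl_poissonIntegral hf_cont hf_bdd)
      (Complex.closure_setOfPred_lt_im 0 ▸ fun _ hz => hU hz)
  have hUbdd (z : ℂ) (hz : 0 ≤ z.im) : ‖U z.re z.im‖ ≤ M :=
    hU hz ▸ norm_poissonIntegral_le hf_bdd z
  refine ⟨⟨⟨M, fun x y => hUbdd ⟨x, y⟩⟩, harmonicContOnCl_upperHalfPlane_iff.1 hUharm⟩, ?_⟩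
  rintro V ⟨K, hVbdd⟩ hVcont hVsmooth hVlaplace hV0 x y hy
  have hVharm := harmonicContOnCl_upperHalfPlane_iff.2 ⟨hVcont, hVsmooth, hVlaplace⟩
  have hdiff := norm_le_of_harmonicContOnCl_upperHalfPlane (K := K + M) (C := 0)
    (hVharm.sub hUharm) (fun z hz => norm_sub_le_of_le (hVbdd _ _ hz) (hUbdd z hz))
    (fun x => by simp [hV0, hU0]) (z := ⟨x, y⟩) hy
  simpa [sub_eq_zero] using hdiff

/-- The Dirichlet problem for the Laplace equation in the upper half-plane:
the Poisson integral `U` of a bounded continuous boundary function `f` is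
bounded, continuous up to the boundary, harmonic in the open upper half-plane,
and is the unique such function with boundary values `f`. -/
theorem dirichlet_problem_upper_half_plane
    (f : ℝ → ℂ) (hf_cont : Continuous f) (M : ℝ) (hf_bdd : ∀ x : ℝ, ‖f x‖ ≤ M)
    (U : ℝ → ℝ → ℂ)
    (hU0 : ∀ x : ℝ, U x 0 = f x)
    (hUpos : ∀ x y : ℝ, 0 < y →
      U x y = (1 / (Real.pi : ℂ)) *
        ∫ u : ℝ, f u * ((y / ((x - u) ^ 2 + y ^ 2) : ℝ) : ℂ)) :
    ((∃ K : ℝ, ∀ x y : ℝ, 0 ≤ y → ‖U x y‖ ≤ K) ∧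
      ContinuousOn (fun p : ℝ × ℝ => U p.1 p.2) {p : ℝ × ℝ | 0 ≤ p.2} ∧
      ContDiffOn ℝ 2 (fun p : ℝ × ℝ => U p.1 p.2) {p : ℝ × ℝ | 0 < p.2} ∧
      (∀ x y : ℝ, 0 < y →
        iteratedDeriv 2 (fun s : ℝ => U s y) x + iteratedDeriv 2 (fun t : ℝ => U x t) y = 0)) ∧
    ∀ V : ℝ → ℝ → ℂ,
      (∃ K : ℝ, ∀ x y : ℝ, 0 ≤ y → ‖V x y‖ ≤ K) →
      ContinuousOn (fun p : ℝ × ℝ => V p.1 p.2) {p : ℝ × ℝ | 0 ≤ p.2} →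
      ContDiffOn ℝ 2 (fun p : ℝ × ℝ => V p.1 p.2) {p : ℝ × ℝ | 0 < p.2} →
      (∀ x y : ℝ, 0 < y →
        iteratedDeriv 2 (fun s : ℝ => V s y) x + iteratedDeriv 2 (fun t : ℝ => V x t) y = 0) →
      (∀ x : ℝ, V x 0 = f x) →
      ∀ x y : ℝ, 0 ≤ y → V x y = U x y :=
  dirichlet_problem_upper_half_plane_general f hf_cont M hf_bdd U hU0 fun x y hy => by
    simpa [mul_comm] using hUpos x y hy
end
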